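/- Let X ⊆ ℝⁿ be an open p-convex set and let f : X → ℝⁿ be a C¹ cooperative irreducible vector field. Assume that for every x ∈ X the (unique, by C¹ regularity of f) maximal solution γₓ of ẋ = f(x) with γₓ(0) = x is defined on all of [0,∞) and its image has compact closure contained in X. Then there exists an open dense set Y ⊆ X such that for every x ∈ Y the ω-limit set of γₓ is a singleton. -/

import Mathlib

open Set Filter Topology

noncomputable section

/-- `f` is a cooperative vector field on `X`: the off-diagonal entries of the
Jacobian are nonnegative. -/
def coopVF {n : ℕ} (f : (Fin n → ℝ) → (Fin n → ℝ)) (X : Set (Fin n → ℝ)) : Prop :=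
  ∀ x ∈ X, ∀ i j : Fin n, i ≠ j → 0 ≤ fderiv ℝ f x (Pi.single j 1) i

/-- The Jacobian matrix of `f` at `x`. -/
def jacMat {n : ℕ} (f : (Fin n → ℝ) → (Fin n → ℝ)) (x : Fin n → ℝ) :
    Fin n → Fin n → ℝ :=
  fun i j => fderiv ℝ f x (Pi.single j 1) i

/-- A matrix is irreducible if for every nonempty proper subset `S` of indices there
are `i ∈ S`, `j ∉ S` with `A i j ≠ 0`. -/
def matIrred {n : ℕ} (A : Fin n → Fin n → ℝ) : Prop :=
  ∀ S : Set (Fin n), S.Nonempty → S ≠ Set.univ → ∃ i ∈ S, ∃ j ∉ S, A i j ≠ 0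

/-- `X` is p-convex: the segment joining any two order-related points of `X` lies in `X`. -/
def pconvex {n : ℕ} (X : Set (Fin n → ℝ)) : Prop :=
  ∀ x ∈ X, ∀ y ∈ X, x < y → segment ℝ x y ⊆ X

/-- `x ≪ y`: strict inequality in every coordinate. -/
def strLt {n : ℕ} (x y : Fin n → ℝ) : Prop := ∀ i, x i < y i

/-- `γ` is a solution of `ẋ = f(x)` on the time interval `I`, with values in `X`. -/
def IsSolOn {n : ℕ} (f : (Fin n → ℝ) → (Fin n → ℝ)) (X : Set (Fin n → ℝ))
    (I : Set ℝ) (γ : ℝ → Fin n → ℝ) : Prop :=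
  (∀ t ∈ I, γ t ∈ X) ∧ (∀ t ∈ I, HasDerivWithinAt γ (f (γ t)) I t)

/-- The ω-limit set (within `X`) of a curve `γ`. -/
def omegaSet {n : ℕ} (X : Set (Fin n → ℝ)) (γ : ℝ → Fin n → ℝ) :
    Set (Fin n → ℝ) :=
  {y | y ∈ X ∧ ∃ t : ℕ → ℝ, Tendsto t atTop atTop ∧
    Tendsto (fun k => γ (t k)) atTop (𝓝 y)}

/-- The α-limit set (within `X`) of a curve `γ`. -/
def alphaSet {n : ℕ} (X : Set (Fin n → ℝ)) (γ : ℝ → Fin n → ℝ) :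
    Set (Fin n → ℝ) :=
  {y | y ∈ X ∧ ∃ t : ℕ → ℝ, Tendsto t atTop atBot ∧
    Tendsto (fun k => γ (t k)) atTop (𝓝 y)}

/-- The Euclidean norm on `Fin n → ℝ`. -/
def eunorm {n : ℕ} (v : Fin n → ℝ) : ℝ := Real.sqrt (∑ i, (v i) ^ 2)

/-- `X` is order-convex: it contains the order interval of any two of its points. -/
def orderConvex {n : ℕ} (X : Set (Fin n → ℝ)) : Prop :=
  ∀ x ∈ X, ∀ y ∈ X, x ≤ y → Set.Icc x y ⊆ X

/-! Since `f` is cooperative and irreducible on a p-convex domain, comparison of solutions makes the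
semiflow of `f` strongly order preserving. An ω-limit set then contains no two related points, and
the limit set dichotomy holds: if `x < y` then either every point of `ω(x)` is smaller than every
point of `ω(y)`, or `ω(x) = ω(y)` and this common set consists of equilibria.

In the second case the common limit set is a single point. Otherwise, being connected, it
accumulates at each of its points `e`; a limiting direction `w` satisfies `Df(e) w = 0` and has
entries of both signs. Gordan's alternative provides a functional `ℓ` that, together with
`ℓ ∘ Df(e)`, is positive on the positive orthant, so near `e` ordered pairs of trajectories separate
exponentially. This is incompatible with `dist (φ t x) (φ t y) → 0` at the times after which this
distance is never exceeded again.

Finally, let `V` be an open set disjoint from the interior of the set of convergent points and let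
`x ∈ V` be the limit of a strictly increasing sequence `u m` in `V`. Two terms with equal limit sets
would share a one-point limit set, attracting the whole order interval between them, which is
excluded. So the sets `ω(u m)` increase strictly, to a point `p` below `ω(x)`. If `ω(x)` had a point
`q ≠ p`, some `z < q` would have an image under the flow that bounds all `ω(u m)`, while the orbit
of `z` ends up below that of `u m` for large `m`, so that `ω(u m)` could not be smaller than
`ω(u (m + 1))`. -/

open scoped NNReal omegaLimit

/-! ### Limit sets of semiflows -/

section NNRealSubmonoid

lemma tendsto_div_floor_div_atTop {T : ℝ≥0} (hT : T ≠ 0) :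
    Tendsto (fun s : ℝ≥0 ↦ s / ⌊s / T⌋₊) atTop (𝓝 T) := by
  have hfloor : Tendsto (fun s : ℝ≥0 ↦ (⌊(s / T : ℝ)⌋₊ : ℝ) / (s / T)) atTop (𝓝 1) :=
    tendsto_nat_floor_div_atTop.comp
      ((NNReal.tendsto_coe_atTop.2 tendsto_id).atTop_div_const (by positivity))
  have h := (hfloor.inv₀ one_ne_zero).mul_const (T : ℝ)
  rw [inv_one, one_mul] at h
  refine NNReal.tendsto_coe.1 (h.congr fun s ↦ ?_)
  have hcast : ⌊(s / T : ℝ)⌋₊ = ⌊s / T⌋₊ := Nonneg.nat_floor_coe (s / T)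
  rw [hcast, inv_div, div_mul_eq_mul_div, div_mul_cancel₀ _ (NNReal.coe_ne_zero.2 hT),
    NNReal.coe_div, NNReal.coe_natCast]

lemma eventually_mem_atTop_of_mem_nhds {S : AddSubmonoid ℝ≥0} {T : ℝ≥0} (hT : T ≠ 0)
    (hS : (S : Set ℝ≥0) ∈ 𝓝 T) : ∀ᶠ s in atTop, s ∈ S := by
  filter_upwards [(tendsto_div_floor_div_atTop hT).eventually hS, eventually_ge_atTop T]
    with s hs hTs
  have hfloor : (⌊s / T⌋₊ : ℝ≥0) ≠ 0 := by
    rw [Nat.cast_ne_zero, ← Nat.one_le_iff_ne_zero]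
    exact Nat.le_floor (by simpa using (one_le_div (pos_iff_ne_zero.2 hT)).2 hTs)
  simpa only [nsmul_eq_mul, mul_div_cancel₀ _ hfloor] using S.nsmul_mem hs ⌊s / T⌋₊

lemma eq_top_of_mem_nhds_zero {S : AddSubmonoid ℝ≥0} (hS : (S : Set ℝ≥0) ∈ 𝓝 0) : S = ⊤ := by
  refine eq_top_iff.2 fun s _ ↦ ?_
  have hdiv : Tendsto (fun k : ℕ ↦ s / (k : ℝ≥0)) atTop (𝓝 0) :=
    tendsto_const_div_atTop_nhds_zero_nat s
  obtain ⟨k, hk, hk0⟩ := ((hdiv.eventually hS).and (eventually_ne_atTop 0)).exists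
  simpa only [nsmul_eq_mul, mul_div_cancel₀ s (Nat.cast_ne_zero.2 hk0)] using S.nsmul_mem hk k

end NNRealSubmonoid

/-- Every forward orbit of the semiflow is relatively compact: the standing compactness assumption
of the limit-set theory. -/
def HasPrecompactOrbits {α : Type*} [TopologicalSpace α] (φ : Flow ℝ≥0 α) : Prop :=
  ∀ x, ∃ K, IsCompact K ∧ ∀ t, φ t x ∈ K

section OmegaLimit

variable {α : Type*} [TopologicalSpace α] {φ : Flow ℝ≥0 α} {x p : α} {U : Ultrafilter ℝ≥0}

lemma mem_omegaLimit_of_tendsto (hU : ↑U ≤ (atTop : Filter ℝ≥0))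
    (hp : Tendsto (φ · x) U (𝓝 p)) : p ∈ ω⁺ φ {x} := by
  rw [mem_omegaLimit_singleton_iff_mapClusterPt, mapClusterPt_iff_ultrafilter]
  exact ⟨U, hU, hp⟩

lemma exists_ultrafilter_tendsto (hp : p ∈ ω⁺ φ {x}) :
    ∃ U : Ultrafilter ℝ≥0, ↑U ≤ (atTop : Filter ℝ≥0) ∧ Tendsto (φ · x) U (𝓝 p) := by
  rwa [mem_omegaLimit_singleton_iff_mapClusterPt, mapClusterPt_iff_ultrafilter] at hp

lemma tendsto_flow_add {l : Filter ℝ≥0} (hp : Tendsto (φ · x) l (𝓝 p)) (s : ℝ≥0) :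
    Tendsto (fun t ↦ φ (s + t) x) l (𝓝 (φ s p)) := by
  simpa only [φ.map_add, Function.comp_def] using ((φ.continuous_toFun s).tendsto p).comp hp

lemma flow_mem_omegaLimit (hp : p ∈ ω⁺ φ {x}) (s : ℝ≥0) : φ s p ∈ ω⁺ φ {x} :=
  φ.isInvariant_omegaLimit atTop {x}
    (fun _ ↦ tendsto_atTop_mono (fun _ ↦ le_add_self) tendsto_id) s hp

lemma omegaLimit_subset_of_mem_omegaLimit (hp : p ∈ ω⁺ φ {x}) : ω⁺ φ {p} ⊆ ω⁺ φ {x} := by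
  refine (omegaLimit_subset_closure_image2 atTop φ {p} univ_mem).trans ?_
  refine closure_minimal ?_ (isClosed_omegaLimit atTop φ {x})
  rintro _ ⟨s, -, _, rfl, rfl⟩
  exact flow_mem_omegaLimit hp s

lemma omegaLimit_subset_of_eventually_mem {C : Set α} (hC : IsClosed C)
    (h : ∀ᶠ t in atTop, φ t x ∈ C) : ω⁺ φ {x} ⊆ C := fun _ hp ↦ by
  obtain ⟨U, hU, hp⟩ := exists_ultrafilter_tendsto hp
  exact hC.mem_of_tendsto hp (hU h)

namespace HasPrecompactOrbits

variable (hφ : HasPrecompactOrbits φ)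
include hφ

lemma exists_tendsto (x : α) (U : Ultrafilter ℝ≥0) : ∃ p, Tendsto (φ · x) U (𝓝 p) := by
  obtain ⟨K, hK, hxK⟩ := hφ x
  obtain ⟨p, -, hp⟩ := hK.ultrafilter_le_nhds (U.map (φ · x))
    (le_principal_iff.2 (Eventually.of_forall hxK : ∀ᶠ t in U, φ t x ∈ K))
  exact ⟨p, hp⟩

lemma exists_mem_omegaLimit_tendsto (x : α) (hU : ↑U ≤ (atTop : Filter ℝ≥0)) :
    ∃ p ∈ ω⁺ φ {x}, Tendsto (φ · x) U (𝓝 p) := by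
  obtain ⟨p, hp⟩ := hφ.exists_tendsto x U
  exact ⟨p, mem_omegaLimit_of_tendsto hU hp, hp⟩

lemma nonempty_omegaLimit (x : α) : (ω⁺ φ {x}).Nonempty := by
  obtain ⟨p, hp, -⟩ := hφ.exists_mem_omegaLimit_tendsto x
    (Ultrafilter.of_le (atTop : Filter ℝ≥0))
  exact ⟨p, hp⟩

variable [T2Space α]

lemma isCompact_omegaLimit (x : α) : IsCompact (ω⁺ φ {x}) := by
  obtain ⟨K, hK, hxK⟩ := hφ x
  exact hK.of_isClosed_subset (isClosed_omegaLimit atTop φ {x})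
    (omegaLimit_subset_of_eventually_mem hK.isClosed (Eventually.of_forall hxK))

lemma exists_mem_omegaLimit_flow_eq (hp : p ∈ ω⁺ φ {x}) (s : ℝ≥0) :
    ∃ q ∈ ω⁺ φ {x}, φ s q = p := by
  obtain ⟨U, hU, hp⟩ := exists_ultrafilter_tendsto hp
  obtain ⟨q, hq⟩ := hφ.exists_tendsto x (U.map (· - s))
  have hsub : Tendsto (fun t ↦ t - s) U atTop := (tendsto_atTop.2 fun b ↦
    (eventually_ge_atTop (b + s)).mono fun _ ↦ le_tsub_of_add_le_right).mono_left hU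
  refine ⟨q, mem_omegaLimit_of_tendsto (U := U.map (· - s)) hsub hq, ?_⟩
  refine tendsto_nhds_unique (tendsto_map'_iff.1 (tendsto_flow_add hq s)) (hp.congr' ?_)
  filter_upwards [hU (eventually_ge_atTop s)] with t ht
  simp only [Function.comp_apply, add_tsub_cancel_of_le ht]

lemma isPreconnected_omegaLimit (x : α) : IsPreconnected (ω⁺ φ {x}) := by
  have hK := hφ.isCompact_omegaLimit x
  refine isPreconnected_closed_iff.2 fun A B hA hB hAB ⟨a, ha, haA⟩ ⟨b, hb, hbB⟩ ↦ ?_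
  by_contra hdisj
  obtain ⟨V, W, hV, hW, hAV, hBW, hVW⟩ := SeparatedNhds.of_isCompact_isCompact
    (hK.inter_right hA) (hK.inter_right hB) (disjoint_left.2 fun p hpA hpB ↦
      hdisj ⟨p, hpA.1, hpA.2, hpB.2⟩)
  have hev : ∀ᶠ t in atTop, φ t x ∈ V ∪ W := by
    obtain ⟨C, hC, hxC⟩ := hφ x
    refine (eventually_mapsTo_of_isCompact_absorbing_of_isOpen_of_omegaLimit_subset atTop φ {x}
      hC (Eventually.of_forall fun t ↦ mapsTo_singleton.2 (hxC t)) (hV.union hW)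
      fun p hp ↦ (hAB hp).imp (hAV ⟨hp, ·⟩) (hBW ⟨hp, ·⟩)).mono fun t ↦ mapsTo_singleton.1
  obtain ⟨S, hS⟩ := eventually_atTop.1 hev
  have hconn : IsPreconnected ((φ · x) '' Ici S) := isPreconnected_Ici.image _ (by fun_prop)
  have hmeets {p : α} {O : Set α} (hp : p ∈ ω⁺ φ {x}) (hO : IsOpen O) (hpO : p ∈ O) :
      ∃ t ∈ Ici S, φ t x ∈ O := by
    have hcluster := (mem_omegaLimit_singleton_iff_mapClusterPt _ _ _ _).1 hp
    obtain ⟨t, htO, ht⟩ := ((hcluster.frequently (hO.mem_nhds hpO)).and_eventually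
      (eventually_ge_atTop S)).exists
    exact ⟨t, ht, htO⟩
  obtain ⟨t, ht, htV⟩ := hmeets ha hV (hAV ⟨ha, haA⟩)
  obtain ⟨s, hs, hsW⟩ := hmeets hb hW (hBW ⟨hb, hbB⟩)
  rcases hconn.subset_or_subset hV hW hVW (image_subset_iff.2 hS) with h | h
  · exact disjoint_left.1 hVW (h ⟨s, hs, rfl⟩) hsW
  · exact disjoint_left.1 hVW htV (h ⟨t, ht, rfl⟩)

end HasPrecompactOrbits

end OmegaLimit

/-! ### Strongly order preserving semiflows -/

/-- A monotone semiflow is strongly order preserving (in the sense of Smith and Thieme) if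
`x < y` implies that `φ t` maps some neighbourhood of `x` below the image of some
neighbourhood of `y`, for some time `t`. -/
structure StronglyOrderPreserving {α : Type*} [TopologicalSpace α] [PartialOrder α]
    (φ : Flow ℝ≥0 α) : Prop where
  monotone : ∀ t, Monotone (φ t)
  exists_eventually_le : ∀ ⦃x y⦄, x < y → ∃ t, ∀ᶠ z in 𝓝 x ×ˢ 𝓝 y, φ t z.1 ≤ φ t z.2

section Monotone

variable {α : Type*} [TopologicalSpace α] [PartialOrder α]
  {φ : Flow ℝ≥0 α} {x p q : α}

lemma eventually_le_flow_of_mem_nhds (hmono : ∀ t, Monotone (φ t)) {T : ℝ≥0} (hT : T ≠ 0)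
    (h : ∀ᶠ s in 𝓝 T, x ≤ φ s x) : ∀ᶠ s in atTop, x ≤ φ s x :=
  eventually_mem_atTop_of_mem_nhds (S :=
    { carrier := {s | x ≤ φ s x}
      zero_mem' := (φ.map_zero_apply x).ge
      add_mem' := fun {s r} (hs : x ≤ φ s x) (hr : x ≤ φ r x) ↦
        hs.trans ((hmono s hr).trans_eq (φ.map_add s r x).symm) }) hT h

lemma le_of_mem_omegaLimit_of_eventually_le [OrderClosedTopology α]
    (hmono : ∀ t, Monotone (φ t)) {r : ℝ≥0}
    (h : ∀ᶠ s in atTop, φ r x ≤ φ s (φ r x)) (hp : p ∈ ω⁺ φ {x}) (hq : q ∈ ω⁺ φ {x}) :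
    p ≤ q := by
  have hle_q (t : ℝ≥0) : φ (t + r) x ≤ q := by
    refine omegaLimit_subset_of_eventually_mem isClosed_Ici ?_ hq
    obtain ⟨S, hS⟩ := eventually_atTop.1 h
    filter_upwards [eventually_ge_atTop (t + (S + r))] with s hs
    obtain ⟨d, rfl⟩ := exists_add_of_le hs
    rw [mem_Ici, show t + (S + r) + d = t + (S + d + r) by ring, φ.map_add, φ.map_add t,
      φ.map_add (S + d)]
    exact hmono t (hS _ le_self_add)
  refine omegaLimit_subset_of_eventually_mem isClosed_Iic ?_ hp
  filter_upwards [eventually_ge_atTop r] with t ht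
  simpa only [mem_Iic, tsub_add_cancel_of_le ht] using hle_q (t - r)

lemma omegaLimit_eq_singleton_of_le_of_le [OrderClosedTopology α]
    (hmono : ∀ t, Monotone (φ t)) (hφ : HasPrecompactOrbits φ) {y z : α} (hxy : x ≤ y) (hyz : y ≤ z)
    (hx : ω⁺ φ {x} = {p}) (hz : ω⁺ φ {z} = {p}) : ω⁺ φ {y} = {p} := by
  refine (hφ.nonempty_omegaLimit y).subset_singleton_iff.1 fun q hq ↦ ?_
  obtain ⟨U, hU, hq⟩ := exists_ultrafilter_tendsto hq
  obtain ⟨a, ha, hxa⟩ := hφ.exists_mem_omegaLimit_tendsto x hU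
  obtain ⟨b, hb, hzb⟩ := hφ.exists_mem_omegaLimit_tendsto z hU
  rw [hx] at ha
  rw [hz] at hb
  obtain rfl : a = p := ha
  obtain rfl : b = a := hb
  exact (le_of_tendsto_of_tendsto' hq hzb fun t ↦ hmono t hyz).antisymm
    (le_of_tendsto_of_tendsto' hxa hq fun t ↦ hmono t hxy)

end Monotone

namespace StronglyOrderPreserving

variable {α : Type*} [TopologicalSpace α] [PartialOrder α] {φ : Flow ℝ≥0 α}
  (h : StronglyOrderPreserving φ) {x y p q : α} {U : Ultrafilter ℝ≥0}
include h

protected lemma dual : StronglyOrderPreserving (α := αᵒᵈ) φ where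
  monotone t := (h.monotone t).dual
  exists_eventually_le x y hxy := by
    obtain ⟨t, ht⟩ := h.exists_eventually_le (OrderDual.ofDual_lt_ofDual.2 hxy)
    exact ⟨t, (tendsto_snd.prodMk tendsto_fst).eventually ht⟩

lemma exists_eventually_forall_ge_le (hxy : x < y) :
    ∃ T, ∀ᶠ z in 𝓝 x ×ˢ 𝓝 y, ∀ t ≥ T, φ t z.1 ≤ φ t z.2 := by
  obtain ⟨T, hT⟩ := h.exists_eventually_le hxy
  refine ⟨T, hT.mono fun z hz t ht ↦ ?_⟩
  rw [← tsub_add_cancel_of_le ht, φ.map_add, φ.map_add]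
  exact h.monotone (t - T) hz

lemma exists_eventually_forall_ge_le_of_isCompact {K : Set α} (hK : IsCompact K)
    (hpK : ∀ k ∈ K, p < k) :
    ∃ T, ∀ᶠ z in 𝓝 p, ∀ k ∈ K, ∀ t ≥ T, φ t z ≤ φ t k := by
  refine hK.induction_on ⟨0, by simp⟩ ?mono ?union ?nhds
  case mono => exact fun s t hst ⟨T, hT⟩ ↦ ⟨T, hT.mono fun z hz k hk ↦ hz k (hst hk)⟩
  case union =>
    rintro s t ⟨S, hS⟩ ⟨T, hT⟩
    refine ⟨S ⊔ T, ?_⟩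
    filter_upwards [hS, hT] with z hzs hzt k hk r hr
    exact hk.elim (hzs k · r (le_sup_left.trans hr)) (hzt k · r (le_sup_right.trans hr))
  case nhds =>
    intro k hk
    obtain ⟨T, hT⟩ := h.exists_eventually_forall_ge_le (hpK k hk)
    obtain ⟨P, hP, Q, hQ, hPQ⟩ := eventually_prod_iff.1 hT
    exact ⟨{w | Q w}, mem_nhdsWithin_of_mem_nhds hQ, T, hP.mono fun z hz w hw ↦ hPQ hz hw⟩

variable [OrderClosedTopology α]

lemma not_lt_of_mem_omegaLimit (hp : p ∈ ω⁺ φ {x}) (hq : q ∈ ω⁺ φ {x}) : ¬ p < q := by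
  intro hpq
  obtain ⟨T, hT⟩ := h.exists_eventually_le hpq
  obtain ⟨P, hP, Q, hQ, hPQ⟩ := eventually_prod_iff.1 hT
  rw [mem_omegaLimit_singleton_iff_mapClusterPt] at hp hq
  obtain ⟨a, ha⟩ := (hp.frequently hP).exists
  obtain ⟨b, hb, hab⟩ := ((hq.frequently (eventually_eventually_nhds.2 hQ)).and_eventually
    (eventually_gt_atTop a)).exists
  have hnear : ∀ᶠ s in 𝓝 (b - a), φ (T + a) x ≤ φ s (φ (T + a) x) := by
    have hcont : Tendsto (fun s ↦ φ (s + a) x) (𝓝 (b - a)) (𝓝 (φ b x)) := by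
      have : Continuous fun s ↦ φ (s + a) x := by fun_prop
      simpa only [tsub_add_cancel_of_le hab.le] using this.tendsto (b - a)
    filter_upwards [hcont.eventually hb] with s hs
    rw [← φ.map_add, show s + (T + a) = T + (s + a) by ring, φ.map_add, φ.map_add T]
    exact hPQ ha hs
  have hge := eventually_le_flow_of_mem_nhds h.monotone (tsub_pos_of_lt hab).ne' hnear
  rw [← mem_omegaLimit_singleton_iff_mapClusterPt] at hp hq
  exact hpq.not_ge (le_of_mem_omegaLimit_of_eventually_le h.monotone hge hq hp)

lemma eq_of_le_of_mem_omegaLimit (hp : p ∈ ω⁺ φ {x}) (hq : q ∈ ω⁺ φ {x}) (hpq : p ≤ q) :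
    p = q :=
  hpq.eq_of_not_lt (h.not_lt_of_mem_omegaLimit hp hq)

lemma flow_eq_of_tendsto_of_tendsto (hxy : x < y) (hU : ↑U ≤ (atTop : Filter ℝ≥0))
    (hx : Tendsto (φ · x) U (𝓝 p)) (hy : Tendsto (φ · y) U (𝓝 p)) (s : ℝ≥0) : φ s p = p := by
  obtain ⟨T, hT⟩ := h.exists_eventually_forall_ge_le hxy
  have hT' : ∀ᶠ t in U, t ≥ T := hU (eventually_ge_atTop T)
  have hflow (z : α) : Tendsto (fun s ↦ φ s z) (𝓝 0) (𝓝 z) := by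
    have : Continuous fun s ↦ φ s z := by fun_prop
    simpa only [φ.map_zero_apply] using this.tendsto 0
  have hle : ∀ᶠ s in 𝓝 0, φ s p ≤ p := by
    filter_upwards [((hflow x).prodMk (tendsto_const_nhds (x := y))).eventually hT] with s hs
    refine le_of_tendsto_of_tendsto (tendsto_flow_add hx s) hy (hT'.mono fun t ht ↦ ?_)
    simpa only [add_comm s t, φ.map_add t s] using hs t ht
  have hge : ∀ᶠ s in 𝓝 0, p ≤ φ s p := by
    filter_upwards [((tendsto_const_nhds (x := x)).prodMk (hflow y)).eventually hT] with s hs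
    refine le_of_tendsto_of_tendsto hx (tendsto_flow_add hy s) (hT'.mono fun t ht ↦ ?_)
    simpa only [add_comm s t, φ.map_add t s] using hs t ht
  have htop := eq_top_of_mem_nhds_zero (S :=
    { carrier := {s | φ s p = p}
      zero_mem' := φ.map_zero_apply p
      add_mem' := fun {s r} (hs : φ s p = p) (hr : φ r p = p) ↦
        (φ.map_add s r p).trans (by rw [hr, hs]) })
    (by filter_upwards [hle, hge] with s hs hs' using hs.antisymm hs')
  exact htop.ge (AddSubmonoid.mem_top s)

lemma tendsto_of_mem_omegaLimit_of_lt (hφ : HasPrecompactOrbits φ) (hxy : x < y)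
    (hU : ↑U ≤ (atTop : Filter ℝ≥0)) (hx : Tendsto (φ · x) U (𝓝 p)) (hp : p ∈ ω⁺ φ {y}) :
    Tendsto (φ · y) U (𝓝 p) := by
  obtain ⟨q, hq, hyq⟩ := hφ.exists_mem_omegaLimit_tendsto y hU
  have hpq : p ≤ q := le_of_tendsto_of_tendsto' hx hyq fun t ↦ h.monotone t hxy.le
  rwa [h.eq_of_le_of_mem_omegaLimit hp hq hpq]

lemma omegaLimit_lt_of_forall_lt (hφ : HasPrecompactOrbits φ) (hp : p ∈ ω⁺ φ {x})
    (hlt : ∀ k ∈ ω⁺ φ {y}, p < k) : ∀ a ∈ ω⁺ φ {x}, ∀ b ∈ ω⁺ φ {y}, a < b := by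
  intro a ha b hb
  obtain ⟨T, hT⟩ :=
    h.exists_eventually_forall_ge_le_of_isCompact (hφ.isCompact_omegaLimit y) hlt
  obtain ⟨r, hr⟩ :=
    (((mem_omegaLimit_singleton_iff_mapClusterPt _ _ _ _).1 hp).frequently hT).exists
  have hab : a ≤ b := by
    refine omegaLimit_subset_of_eventually_mem isClosed_Iic ?_ ha
    filter_upwards [eventually_ge_atTop (T + r)] with t ht
    obtain ⟨c, hc, rfl⟩ := hφ.exists_mem_omegaLimit_flow_eq hb (t - r)
    rw [mem_Iic, ← tsub_add_cancel_of_le (le_of_add_le_right ht), φ.map_add, add_tsub_cancel_right]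
    exact hr c hc (t - r) (le_tsub_of_add_le_right ht)
  refine hab.lt_of_ne ?_
  rintro rfl
  exact h.not_lt_of_mem_omegaLimit hp ha (hlt a hb)

lemma notMem_omegaLimit_of_tendsto_of_lt (hφ : HasPrecompactOrbits φ) (hxy : x < y)
    (hU : ↑U ≤ (atTop : Filter ℝ≥0)) (hx : Tendsto (φ · x) U (𝓝 p))
    (hy : Tendsto (φ · y) U (𝓝 q)) (hpq : p < q) : q ∉ ω⁺ φ {x} := fun hq ↦
  hpq.ne <| tendsto_nhds_unique hx <|
    h.dual.tendsto_of_mem_omegaLimit_of_lt (α := αᵒᵈ) hφ hxy hU hy hq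

lemma eventually_flow_le_of_tendsto (hU : ↑U ≤ (atTop : Filter ℝ≥0))
    (hx : Tendsto (φ · x) U (𝓝 p)) (hy : Tendsto (φ · y) U (𝓝 q)) {r : ℝ≥0} (hr : φ r p < q) :
    ∀ᶠ s in 𝓝 r, φ s p ≤ q := by
  obtain ⟨T, hT⟩ := h.exists_eventually_forall_ge_le hr
  obtain ⟨P, hP, Q, hQ, hPQ⟩ := eventually_prod_iff.1 hT
  have hxr := ((φ.continuous_toFun r).tendsto p).comp hx
  obtain ⟨t, hPt, hQt⟩ :=
    ((hxr.eventually (eventually_eventually_nhds.2 hP)).and (hy.eventually hQ)).exists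
  have hcont : Continuous fun s ↦ φ s (φ t x) := by fun_prop
  filter_upwards [(hcont.tendsto r).eventually hPt] with s hs
  refine le_of_tendsto_of_tendsto (tendsto_flow_add hx s) hy ?_
  filter_upwards [hU (eventually_ge_atTop (T + t))] with u hu
  obtain ⟨d, rfl⟩ := exists_add_of_le hu
  rw [show s + (T + t + d) = T + d + (s + t) by ring, show T + t + d = T + d + t by ring,
    φ.map_add, φ.map_add s, φ.map_add (T + d)]
  exact hPQ hs hQt (T + d) le_self_add

lemma flow_le_of_tendsto_of_tendsto (hφ : HasPrecompactOrbits φ) (hxy : x < y)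
    (hU : ↑U ≤ (atTop : Filter ℝ≥0)) (hx : Tendsto (φ · x) U (𝓝 p))
    (hy : Tendsto (φ · y) U (𝓝 q)) (hpq : p < q) (s : ℝ≥0) : φ s p ≤ q := by
  have hne (r : ℝ≥0) : φ r p ≠ q := fun hr ↦ h.notMem_omegaLimit_of_tendsto_of_lt hφ hxy hU hx hy
    hpq (hr ▸ flow_mem_omegaLimit (mem_omegaLimit_of_tendsto hU hx) r)
  have hcont : Continuous fun r ↦ φ r p := by fun_prop
  have hclopen : IsClopen {r | φ r p ≤ q} :=
    ⟨isClosed_le hcont continuous_const, isOpen_iff_eventually.2 fun r (hr : φ r p ≤ q) ↦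
      h.eventually_flow_le_of_tendsto hU hx hy (hr.lt_of_ne (hne r))⟩
  have huniv := hclopen.eq_univ ⟨0, (φ.map_zero_apply p).trans_le hpq.le⟩
  exact huniv.ge (mem_univ s)

lemma omegaLimit_lt_of_tendsto (hφ : HasPrecompactOrbits φ) (hxy : x < y)
    (hU : ↑U ≤ (atTop : Filter ℝ≥0)) (hx : Tendsto (φ · x) U (𝓝 p))
    (hy : Tendsto (φ · y) U (𝓝 q)) (hpq : p < q) : ∀ a ∈ ω⁺ φ {x}, ∀ b ∈ ω⁺ φ {y}, a < b := by
  have hp := mem_omegaLimit_of_tendsto hU hx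
  have hq := mem_omegaLimit_of_tendsto hU hy
  have hlt (a) (ha : a ∈ ω⁺ φ {p}) : a < q := by
    refine lt_of_le_of_ne (omegaLimit_subset_of_eventually_mem isClosed_Iic
      (Eventually.of_forall (h.flow_le_of_tendsto_of_tendsto hφ hxy hU hx hy hpq)) ha) ?_
    rintro rfl
    exact h.notMem_omegaLimit_of_tendsto_of_lt hφ hxy hU hx hy hpq
      (omegaLimit_subset_of_mem_omegaLimit hp ha)
  obtain ⟨c, hc⟩ := hφ.nonempty_omegaLimit p
  refine h.omegaLimit_lt_of_forall_lt hφ (omegaLimit_subset_of_mem_omegaLimit hp hc) ?_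
  exact fun b hb ↦ h.dual.omegaLimit_lt_of_forall_lt (α := αᵒᵈ) hφ hq hlt b hb c hc

theorem omegaLimit_lt_or_eq (hφ : HasPrecompactOrbits φ) (hxy : x < y) :
    (∀ a ∈ ω⁺ φ {x}, ∀ b ∈ ω⁺ φ {y}, a < b) ∨ ω⁺ φ {x} = ω⁺ φ {y} := by
  refine or_iff_not_imp_left.2 fun hlt ↦ ?_
  have heq {U : Ultrafilter ℝ≥0} (hU : ↑U ≤ (atTop : Filter ℝ≥0)) {a b : α}
      (ha : Tendsto (φ · x) U (𝓝 a)) (hb : Tendsto (φ · y) U (𝓝 b)) : a = b := by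
    have hab : a ≤ b := le_of_tendsto_of_tendsto' ha hb fun t ↦ h.monotone t hxy.le
    exact hab.eq_of_not_lt fun hab' ↦ hlt (h.omegaLimit_lt_of_tendsto hφ hxy hU ha hb hab')
  refine Subset.antisymm (fun a ha ↦ ?_) fun b hb ↦ ?_
  · obtain ⟨U, hU, ha⟩ := exists_ultrafilter_tendsto ha
    obtain ⟨b, hb, hyb⟩ := hφ.exists_mem_omegaLimit_tendsto y hU
    rwa [heq hU ha hyb]
  · obtain ⟨U, hU, hb⟩ := exists_ultrafilter_tendsto hb
    obtain ⟨a, ha, hxa⟩ := hφ.exists_mem_omegaLimit_tendsto x hU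
    rwa [← heq hU hxa hb]

lemma flow_eq_of_omegaLimit_eq (hφ : HasPrecompactOrbits φ) (hxy : x < y)
    (heq : ω⁺ φ {x} = ω⁺ φ {y}) (hp : p ∈ ω⁺ φ {x}) (s : ℝ≥0) : φ s p = p := by
  obtain ⟨U, hU, hx⟩ := exists_ultrafilter_tendsto hp
  exact h.flow_eq_of_tendsto_of_tendsto hxy hU hx
    (h.tendsto_of_mem_omegaLimit_of_lt hφ hxy hU hx (heq ▸ hp)) s

lemma omegaLimit_lt_of_omegaLimit_lt (hφ : HasPrecompactOrbits φ) {z : α} (hyz : y < z)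
    (hxz : x < z) (hlt : ∀ a ∈ ω⁺ φ {x}, ∀ b ∈ ω⁺ φ {y}, a < b) :
    ∀ a ∈ ω⁺ φ {x}, ∀ b ∈ ω⁺ φ {z}, a < b := by
  obtain ⟨c, hc⟩ := hφ.nonempty_omegaLimit y
  refine (h.omegaLimit_lt_or_eq hφ hxz).resolve_right fun hxz' ↦ ?_
  rcases h.omegaLimit_lt_or_eq hφ hyz with hyz' | hyz'
  · obtain ⟨a, ha⟩ := hφ.nonempty_omegaLimit x
    exact (hlt a ha c hc).asymm (hyz' c hc a (hxz' ▸ ha))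
  · exact (hlt c (by rwa [hxz', ← hyz']) c hc).false

lemma not_forall_omegaLimit_le_flow (hφ : HasPrecompactOrbits φ) {u : ℕ → α}
    (hu : Tendsto u atTop (𝓝 x))
    (hlt : ∀ m, ∀ a ∈ ω⁺ φ {u m}, ∀ b ∈ ω⁺ φ {u (m + 1)}, a < b)
    (hq : q ∈ ω⁺ φ {x}) (hpq : p < q) (T : ℝ≥0) : ¬ ∀ m, ∀ a ∈ ω⁺ φ {u m}, a ≤ φ T p := by
  intro hle
  obtain ⟨S, hS⟩ := h.exists_eventually_forall_ge_le hpq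
  obtain ⟨P, hP, Q, hQ, hPQ⟩ := eventually_prod_iff.1 hS
  obtain ⟨r, hr⟩ := (((mem_omegaLimit_singleton_iff_mapClusterPt _ _ _ _).1 hq).frequently
    (eventually_eventually_nhds.2 hQ)).exists
  obtain ⟨m, hm⟩ :=
    ((((φ.continuous_toFun r).tendsto x).comp hu).eventually hr).exists
  obtain ⟨a, ha⟩ := hφ.nonempty_omegaLimit (u m)
  obtain ⟨b, hb⟩ := hφ.nonempty_omegaLimit (u (m + 1))
  refine (hlt m a ha b hb).not_ge (omegaLimit_subset_of_eventually_mem isClosed_Ici ?_ ha)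
  filter_upwards [eventually_ge_atTop (T + S + r)] with t ht
  obtain ⟨d, rfl⟩ := exists_add_of_le ht
  obtain ⟨c, hc, rfl⟩ := hφ.exists_mem_omegaLimit_flow_eq hb (S + d)
  calc φ (S + d) c ≤ φ (S + d) (φ T p) := h.monotone _ (hle (m + 1) c hc)
    _ = φ T (φ (S + d) p) := by rw [← φ.map_add, add_comm, φ.map_add]
    _ ≤ φ T (φ (S + d) (φ r (u m))) := h.monotone T (hPQ hP.self_of_nhds hm _ le_self_add)
    _ = φ (T + S + r + d) (u m) := by
      rw [← φ.map_add, ← φ.map_add, show T + (S + d) + r = T + S + r + d by ring]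

end StronglyOrderPreserving

lemma isOpen_setOf_strLt {n : ℕ} :
    IsOpen {z : (Fin n → ℝ) × (Fin n → ℝ) | strLt z.1 z.2} := by
  simp only [strLt, ofPred_forall]
  exact isOpen_iInter_of_finite fun i ↦ isOpen_lt (by fun_prop) (by fun_prop)

lemma strLt.le {n : ℕ} {x y : Fin n → ℝ} (hxy : strLt x y) : x ≤ y := fun i ↦ (hxy i).le

lemma strLt.lt {n : ℕ} [Nonempty (Fin n)] {x y : Fin n → ℝ} (hxy : strLt x y) : x < y :=
  Pi.lt_def.2 ⟨hxy.le, Classical.arbitrary _, hxy _⟩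

section EuclideanSubset

variable {n : ℕ} {X : Set (Fin n → ℝ)} {φ : Flow ℝ≥0 X} {x : X} {u : ℕ → X}

lemma exists_tendsto_of_omegaLimit_lt (h : StronglyOrderPreserving φ)
    (hφ : HasPrecompactOrbits φ) (hux : ∀ m, u m < x)
    (hlt : ∀ m, ∀ a ∈ ω⁺ φ {u m}, ∀ b ∈ ω⁺ φ {u (m + 1)}, a < b) :
    ∃ p : Fin n → ℝ, (∀ m, ∀ a ∈ ω⁺ φ {u m}, a ≤ p) ∧ (∀ b ∈ ω⁺ φ {x}, p ≤ b) ∧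
      ∀ a : ℕ → X, (∀ m, a m ∈ ω⁺ φ {u m}) →
      Tendsto (fun m ↦ (a m : Fin n → ℝ)) atTop (𝓝 p) := by
  have hltx (m) := h.omegaLimit_lt_of_omegaLimit_lt hφ (hux (m + 1)) (hux m) (hlt m)
  have hmono {a : ℕ → X} (ha : ∀ m, a m ∈ ω⁺ φ {u m}) : Monotone fun m ↦ (a m : Fin n → ℝ) :=
    monotone_nat_of_le_succ fun m ↦ (hlt m _ (ha m) _ (ha (m + 1))).le
  choose c hc using fun m ↦ hφ.nonempty_omegaLimit (u m)
  obtain ⟨q, hq⟩ := hφ.nonempty_omegaLimit x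
  have hbdd : BddAbove (range fun m ↦ (c m : Fin n → ℝ)) :=
    ⟨q, forall_mem_range.2 fun m ↦ (hltx m _ (hc m) q hq).le⟩
  have hlim := tendsto_atTop_ciSup (hmono hc) hbdd
  refine ⟨⨆ m, (c m : Fin n → ℝ), fun m a ha ↦ ?_,
    fun b hb ↦ le_of_tendsto' hlim fun m ↦ (hltx m _ (hc m) b hb).le, fun a ha ↦ ?_⟩
  · exact le_trans (Subtype.coe_le_coe.2 (hlt m a ha _ (hc (m + 1))).le) (le_ciSup hbdd (m + 1))
  refine (tendsto_add_atTop_iff_nat 1).1 (tendsto_pi_nhds.2 fun i ↦ ?_)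
  refine tendsto_of_tendsto_of_tendsto_of_le_of_le (tendsto_pi_nhds.1 hlim i)
    ((tendsto_pi_nhds.1 hlim i).comp (tendsto_add_atTop_nat 2)) (fun m ↦ ?_) fun m ↦ ?_
  · exact (hlt m _ (hc m) _ (ha (m + 1))).le i
  · exact (hlt (m + 1) _ (ha (m + 1)) _ (hc (m + 2))).le i

-- The limit `p` need not lie in `X`, but points of the segment from `p` to `q` near `q` do; such a
-- point `z` is approximated by points on the segments from `a m` to `q`.
lemma exists_flow_ge_of_tendsto (h : StronglyOrderPreserving φ) (hX : IsOpen X)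
    {a : ℕ → X} {p : Fin n → ℝ} {q : X} (ha : Tendsto (fun m ↦ (a m : Fin n → ℝ)) atTop (𝓝 p))
    (ha' : Tendsto (fun m ↦ (φ 1 (a m) : Fin n → ℝ)) atTop (𝓝 p)) (haq : ∀ m, a m ≤ q)
    (hpq : p ≠ q) : ∃ z < q, p ≤ φ 1 z := by
  have hpq' : p < q := (le_of_tendsto' ha haq).lt_of_ne hpq
  obtain ⟨l, hlX, hl0, hl1⟩ :
      ∃ l : ℝ, (q : Fin n → ℝ) - l • (q - p) ∈ X ∧ 0 < l ∧ l ≤ 1 := by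
    have hcont : Continuous fun l : ℝ ↦ (q : Fin n → ℝ) - l • (q - p) := by fun_prop
    have hX0 : ∀ᶠ l : ℝ in 𝓝 0, (q : Fin n → ℝ) - l • (q - p) ∈ X :=
      hcont.tendsto 0 |>.eventually_mem (hX.mem_nhds (by simp))
    exact ((hX0.filter_mono nhdsWithin_le_nhds).and (Ioc_mem_nhdsGT one_pos)).exists
  have hlim : Tendsto (fun m ↦ (q : Fin n → ℝ) - l • (q - a m)) atTop (𝓝 (q - l • (q - p))) :=
    tendsto_const_nhds.sub ((tendsto_const_nhds.sub ha).const_smul l)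
  obtain ⟨w, hw⟩ : ∃ w : ℕ → X, ∀ᶠ m in atTop, (w m : Fin n → ℝ) = q - l • (q - a m) :=
    have : Nonempty X := ⟨q⟩
    Eventually.choice (r := fun m (w : X) ↦ (w : Fin n → ℝ) = q - l • (q - a m))
      ((hlim.eventually_mem (hX.mem_nhds hlX)).mono fun m hm ↦ ⟨⟨_, hm⟩, rfl⟩)
  have hwz : Tendsto w atTop (𝓝 ⟨_, hlX⟩) :=
    tendsto_subtype_rng.2 (hlim.congr' (hw.mono fun _ ↦ Eq.symm))
  refine ⟨⟨_, hlX⟩, sub_lt_self _ (smul_pos hl0 (sub_pos.2 hpq')), ?_⟩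
  refine le_of_tendsto_of_tendsto ha'
    (((continuous_subtype_val.comp (φ.continuous_toFun 1)).tendsto _).comp hwz)
    (hw.mono fun m hm ↦ h.monotone 1 ?_)
  rw [← Subtype.coe_le_coe, hm, le_sub_comm]
  exact smul_le_of_le_one_left (sub_nonneg.2 (haq m)) hl1

theorem exists_omegaLimit_eq_singleton_of_omegaLimit_lt (h : StronglyOrderPreserving φ)
    (hφ : HasPrecompactOrbits φ) (hX : IsOpen X) (hux : ∀ m, u m < x)
    (hu : Tendsto u atTop (𝓝 x))
    (hlt : ∀ m, ∀ a ∈ ω⁺ φ {u m}, ∀ b ∈ ω⁺ φ {u (m + 1)}, a < b) : ∃ p, ω⁺ φ {x} = {p} := by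
  obtain ⟨p, hup, hpx, hp⟩ := exists_tendsto_of_omegaLimit_lt h hφ hux hlt
  choose a ha using fun m ↦ hφ.nonempty_omegaLimit (u m)
  obtain ⟨q, hq⟩ := hφ.nonempty_omegaLimit x
  rcases eq_or_ne p q with rfl | hpq
  · exact ⟨q, eq_singleton_iff_unique_mem.2
      ⟨hq, fun b hb ↦ (h.eq_of_le_of_mem_omegaLimit hq hb (hpx b hb)).symm⟩⟩
  obtain ⟨z, hzq, hpz⟩ := exists_flow_ge_of_tendsto h hX (hp a ha)
    (hp _ fun m ↦ flow_mem_omegaLimit (ha m) 1) (fun m ↦ (hup m _ (ha m)).trans (hpx q hq)) hpq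
  exact (h.not_forall_omegaLimit_le_flow hφ hu hlt hq hzq 1
    fun m a ha ↦ (hup m a ha).trans hpz).elim

lemma mem_interior_of_omegaLimit_eq_singleton (hmono : ∀ t, Monotone (φ t))
    (hφ : HasPrecompactOrbits φ) {p w y z : X} (hyw : strLt (y : Fin n → ℝ) w)
    (hwz : strLt (w : Fin n → ℝ) z) (hy : ω⁺ φ {y} = {p}) (hz : ω⁺ φ {z} = {p}) :
    w ∈ interior {x | ∃ p, ω⁺ φ {x} = {p}} := by
  refine mem_interior.2 ⟨{x | strLt (y : Fin n → ℝ) x ∧ strLt (x : Fin n → ℝ) z}, ?_, ?_, hyw, hwz⟩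
  · exact fun x hx ↦ ⟨p, omegaLimit_eq_singleton_of_le_of_le hmono hφ hx.1.le hx.2.le hy hz⟩
  · exact (isOpen_setOf_strLt.preimage (by fun_prop : Continuous fun x : X ↦
      ((y : Fin n → ℝ), (x : Fin n → ℝ)))).inter (isOpen_setOf_strLt.preimage
        (by fun_prop : Continuous fun x : X ↦ ((x : Fin n → ℝ), (z : Fin n → ℝ))))

lemma exists_seq_strLt_tendsto (hX : IsOpen X) {V : Set X} (hV : V ∈ 𝓝 x) :
    ∃ u : ℕ → X, (∀ m, u m ∈ V) ∧ (∀ m, strLt (u m : Fin n → ℝ) (u (m + 1))) ∧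
      (∀ m, strLt (u m : Fin n → ℝ) x) ∧ Tendsto u atTop (𝓝 x) := by
  let v (r : ℝ) : Fin n → ℝ := fun i ↦ (x : Fin n → ℝ) i - r
  have hv : Continuous v := by fun_prop
  have hv0 : v 0 = x := funext fun i ↦ sub_zero _
  obtain ⟨ε, hε, hball⟩ := Metric.eventually_nhds_iff.1 <| hv.tendsto 0 |>.eventually_mem <|
    hv0 ▸ hX.isOpenMap_subtype_val.image_mem_nhds hV
  obtain ⟨r, hr, hrε, hr0⟩ := exists_seq_strictAnti_tendsto' hε
  choose u huV huv using fun m ↦ hball (y := r m) (by simpa [abs_of_pos (hrε m).1] using (hrε m).2)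
  refine ⟨u, huV, fun m i ↦ ?_, fun m i ↦ ?_, tendsto_subtype_rng.2 ?_⟩
  · simpa only [huv] using sub_lt_sub_left (hr m.lt_succ_self) _
  · simpa only [huv] using sub_lt_self _ (hrε m).1
  · simpa only [huv, ← hv0, Function.comp_def] using (hv.tendsto 0).comp hr0

lemma exists_omegaLimit_eq_singleton_of_notMem_closure (h : StronglyOrderPreserving φ)
    (hφ : HasPrecompactOrbits φ) (hX : IsOpen X)
    (heq : ∀ ⦃x y⦄, x < y → ω⁺ φ {x} = ω⁺ φ {y} → ∃ p, ω⁺ φ {x} = {p})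
    (hx : x ∉ closure (interior {y | ∃ p, ω⁺ φ {y} = {p}})) : ∃ p, ω⁺ φ {x} = {p} := by
  rcases isEmpty_or_nonempty (Fin n) with hn | hn
  · obtain ⟨p, hp⟩ := hφ.nonempty_omegaLimit x
    exact ⟨p, eq_singleton_iff_unique_mem.2 ⟨hp, fun _ _ ↦ Subsingleton.elim _ _⟩⟩
  obtain ⟨u, huV, hu_lt, hux, hu⟩ :=
    exists_seq_strLt_tendsto hX (isClosed_closure.isOpen_compl.mem_nhds hx)
  refine exists_omegaLimit_eq_singleton_of_omegaLimit_lt (u := fun m ↦ u (2 * m)) h hφ hX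
    (fun m ↦ (hux _).lt) (hu.comp (tendsto_id.const_mul_atTop' two_pos)) fun m ↦ ?_
  have hlt : u (2 * m) < u (2 * (m + 1)) := (hu_lt (2 * m)).lt.trans (hu_lt (2 * m + 1)).lt
  refine (h.omegaLimit_lt_or_eq hφ hlt).resolve_right fun hm ↦ huV (2 * m + 1) ?_
  obtain ⟨p, hp⟩ := heq hlt hm
  exact subset_closure (mem_interior_of_omegaLimit_eq_singleton h.monotone hφ
    (hu_lt (2 * m)) (hu_lt (2 * m + 1)) hp (hm.symm.trans hp))

theorem dense_interior_setOf_omegaLimit_eq_singleton (h : StronglyOrderPreserving φ)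
    (hφ : HasPrecompactOrbits φ) (hX : IsOpen X)
    (heq : ∀ ⦃x y⦄, x < y → ω⁺ φ {x} = ω⁺ φ {y} → ∃ p, ω⁺ φ {x} = {p}) :
    Dense (interior {x | ∃ p, ω⁺ φ {x} = {p}}) := by
  refine fun x ↦ by_contra fun hx ↦ hx (subset_closure ?_)
  refine mem_interior.2 ⟨_, fun y hy ↦ ?_, isClosed_closure.isOpen_compl, hx⟩
  exact exists_omegaLimit_eq_singleton_of_notMem_closure h hφ hX heq hy

end EuclideanSubset

/-! ### Metzler matrices -/

section MetzlerMatrix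

/-- A Metzler matrix: one whose off-diagonal entries are nonnegative, as are the Jacobians of a
cooperative vector field. -/
def IsMetzler {ι : Type*} (A : Matrix ι ι ℝ) : Prop := ∀ ⦃i j⦄, i ≠ j → 0 ≤ A i j

lemma IsMetzler.diag_mul_le_mulVec {ι : Type*} [Fintype ι] {A : Matrix ι ι ℝ} {v : ι → ℝ}
    (hA : IsMetzler A) (hv : 0 ≤ v) (i : ι) : A i i * v i ≤ A.mulVec v i := by
  classical
  refine (le_add_of_nonneg_right ?_).trans_eq
    (Finset.add_sum_erase _ (fun j ↦ A i j * v j) (Finset.mem_univ i))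
  exact Finset.sum_nonneg fun j hj ↦ mul_nonneg (hA (Finset.ne_of_mem_erase hj).symm) (hv j)

variable {n : ℕ} {A : Matrix (Fin n) (Fin n) ℝ} {v w : Fin n → ℝ}

lemma IsMetzler.exists_mulVec_pos (hA : IsMetzler A) (hirr : matIrred A) (hv : 0 ≤ v)
    (hv0 : v ≠ 0) (hvi : ∃ i, v i = 0) : ∃ i, v i = 0 ∧ 0 < A.mulVec v i := by
  obtain ⟨i, hi, j, hj, hij⟩ := hirr {i | v i = 0} hvi fun h ↦ hv0 (funext (eq_univ_iff_forall.1 h))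
  have hij' : i ≠ j := fun h ↦ hj (h ▸ hi)
  refine ⟨i, hi, Finset.sum_pos' (fun k _ ↦ ?_) ⟨j, Finset.mem_univ j, ?_⟩⟩
  · rcases eq_or_ne i k with rfl | hik
    · exact (mul_eq_zero_of_right _ hi).ge
    · exact mul_nonneg (hA hik) (hv k)
  · exact mul_pos ((hA hij').lt_of_ne' hij) ((hv j).lt_of_ne' hj)

lemma IsMetzler.pos_of_mulVec_nonpos (hA : IsMetzler A) (hirr : matIrred A) (hv : 0 ≤ v)
    (hv0 : v ≠ 0) (hAv : A.mulVec v ≤ 0) (i : Fin n) : 0 < v i := by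
  refine (hv i).lt_of_ne' fun hi ↦ ?_
  obtain ⟨k, -, hk⟩ := hA.exists_mulVec_pos hirr hv hv0 ⟨i, hi⟩
  exact hk.not_ge (hAv k)

-- Rescale `v` to the smallest multiple that dominates `w`; the difference touches zero.
lemma IsMetzler.eq_zero_of_mulVec_nonpos (hA : IsMetzler A) (hirr : matIrred A)
    (hw : A.mulVec w = 0) {i j : Fin n} (hi : 0 < w i) (hj : w j < 0) (hv : 0 ≤ v)
    (hAv : A.mulVec v ≤ 0) : v = 0 := by
  by_contra hv0
  have hpos := hA.pos_of_mulVec_nonpos hirr hv hv0 hAv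
  obtain ⟨k, -, hk⟩ :=
    Finset.exists_max_image Finset.univ (fun k ↦ w k / v k) ⟨i, Finset.mem_univ i⟩
  have hm : 0 < w k / v k := (div_pos hi (hpos i)).trans_le (hk i (Finset.mem_univ i))
  have hle : 0 ≤ (w k / v k) • v - w := fun l ↦
    sub_nonneg.2 ((div_le_iff₀ (hpos l)).1 (hk l (Finset.mem_univ l)))
  have hzero : (w k / v k) • v - w = 0 := by
    by_contra hne
    refine (hA.pos_of_mulVec_nonpos hirr hle hne ?_ k).ne' ?_
    · rw [Matrix.mulVec_sub, Matrix.mulVec_smul, hw, sub_zero]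
      exact smul_nonpos_of_nonneg_of_nonpos hm.le hAv
    · rw [Pi.sub_apply, Pi.smul_apply, smul_eq_mul, div_mul_cancel₀ _ (hpos k).ne', sub_self]
  rw [← sub_eq_zero.1 hzero] at hj
  exact hj.not_ge (mul_nonneg hm.le (hv j))

-- Gordan's theorem of the alternative.
lemma exists_forall_pos_of_forall_sum_smul_eq_zero {ι E : Type*} [Fintype ι] [AddCommGroup E]
    [Module ℝ E] [TopologicalSpace E] [T2Space E] [IsTopologicalAddGroup E] [ContinuousSMul ℝ E]
    [LocallyConvexSpace ℝ E]
    (c : ι → E) (hc : ∀ w : ι → ℝ, 0 ≤ w → ∑ k, w k • c k = 0 → w = 0) :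
    ∃ ℓ : E →L[ℝ] ℝ, ∀ k, 0 < ℓ (c k) := by
  classical
  have hconv : Convex ℝ (Fintype.linearCombination ℝ c '' stdSimplex ℝ ι) :=
    (convex_stdSimplex ℝ ι).linear_image _
  have hcomp : IsCompact (Fintype.linearCombination ℝ c '' stdSimplex ℝ ι) :=
    (isCompact_stdSimplex ℝ ι).image (LinearMap.continuous_of_finiteDimensional _)
  obtain ⟨ℓ, u, hu0, hu⟩ := geometric_hahn_banach_point_closed hconv hcomp.isClosed (x := 0) <| by
    rintro ⟨w, ⟨hw0, hw1⟩, hw⟩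
    simp [hc w hw0 hw] at hw1
  rw [map_zero] at hu0
  refine ⟨ℓ, fun k ↦ hu0.trans (hu _ ⟨Pi.single k 1, single_mem_stdSimplex ℝ k, ?_⟩)⟩
  rw [Fintype.linearCombination_apply_single, one_smul]

lemma IsMetzler.exists_forall_single_pos (hA : IsMetzler A) (hirr : matIrred A)
    (hw : A.mulVec w = 0) {i j : Fin n} (hi : 0 < w i) (hj : w j < 0) :
    ∃ ℓ : (Fin n → ℝ) →L[ℝ] ℝ, ∀ k, 0 < ℓ (Pi.single k 1) ∧ 0 < ℓ (A.mulVec (Pi.single k 1)) := by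
  obtain ⟨ℓ, hℓ⟩ := exists_forall_pos_of_forall_sum_smul_eq_zero
    (Sum.elim (fun k ↦ A.mulVec (Pi.single k 1)) fun k ↦ Pi.single k (1 : ℝ)) fun v hv hsum ↦ by
      have hsum' : A.mulVec (v ∘ Sum.inl) + v ∘ Sum.inr = 0 := by
        rw [← hsum, Fintype.sum_sum_type]
        simp only [Sum.elim_inl, Sum.elim_inr, ← Matrix.mulVec_smul, ← Matrix.mulVec_sum]
        simp only [← Pi.single_smul, smul_eq_mul, mul_one]
        exact congr_arg₂ (A.mulVec · + ·) (Finset.univ_sum_single (v ∘ Sum.inl)).symm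
          (Finset.univ_sum_single (v ∘ Sum.inr)).symm
      have hl : v ∘ Sum.inl = 0 := hA.eq_zero_of_mulVec_nonpos hirr hw hi hj (fun k ↦ hv _) <| by
        rw [eq_neg_of_add_eq_zero_left hsum', neg_nonpos]
        exact fun k ↦ hv _
      rw [hl, Matrix.mulVec_zero, zero_add] at hsum'
      rw [← Sum.elim_comp_inl_inr v, hl, hsum', Sum.elim_zero_zero]
  exact ⟨ℓ, fun k ↦ ⟨hℓ (Sum.inr k), hℓ (Sum.inl k)⟩⟩

end MetzlerMatrix

/-! ### Solutions and the semiflow they generate -/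

section Comparison

lemma mapsTo_Icc_of_forall_mapsTo_Ico {α : Type*} [TopologicalSpace α] {g : ℝ → α} {V : Set α}
    {a b : ℝ} (hg : ContinuousOn g (Icc a b)) (hV : IsOpen V)
    (h : ∀ t ∈ Icc a b, MapsTo g (Ico a t) V → g t ∈ V) : MapsTo g (Icc a b) V := by
  by_contra hmaps
  obtain ⟨t, ht, htV⟩ : ∃ t ∈ Icc a b, g t ∉ V := by
    simpa only [MapsTo, not_forall, exists_prop] using hmaps
  have hclosed : IsClosed (Icc a b ∩ g ⁻¹' Vᶜ) :=
    hg.preimage_isClosed_of_isClosed isClosed_Icc hV.isClosed_compl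
  obtain ⟨s, ⟨hs, hsV⟩, hleast⟩ :=
    (isCompact_Icc.of_isClosed_subset hclosed inter_subset_left).exists_isLeast ⟨t, ht, htV⟩
  refine hsV (h s hs fun r hr ↦ by_contra fun hrV ↦ ?_)
  exact (hleast ⟨⟨hr.1, hr.2.le.trans hs.2⟩, hrV⟩).not_gt hr.2

lemma mul_exp_le_of_mul_le_deriv_right {g g' : ℝ → ℝ} {c a b : ℝ} (hg : ContinuousOn g (Icc a b))
    (hg' : ∀ t ∈ Ico a b, HasDerivWithinAt g (g' t) (Ici t) t)
    (h : ∀ t ∈ Ico a b, c * g t ≤ g' t) {t : ℝ} (ht : t ∈ Icc a b) :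
    g a * Real.exp (c * (t - a)) ≤ g t := by
  have hle := le_gronwallBound_of_liminf_deriv_right_le (f := -g) (f' := -g') (K := c) (ε := 0)
    hg.neg (fun s hs r ↦ (hg' s hs).neg.liminf_right_slope_le) le_rfl
    (fun s hs ↦ by simpa using h s hs) t ht
  rw [gronwallBound_ε0, Pi.neg_apply, Pi.neg_apply, neg_mul] at hle
  exact neg_le_neg_iff.1 hle

end Comparison

section Solutions

variable {n : ℕ} {f : (Fin n → ℝ) → (Fin n → ℝ)} {X : Set (Fin n → ℝ)} {u v : ℝ → Fin n → ℝ}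

namespace IsSolOn

lemma mono {I J : Set ℝ} (hu : IsSolOn f X J u) (hIJ : I ⊆ J) : IsSolOn f X I u :=
  ⟨fun t ht ↦ hu.1 t (hIJ ht), fun t ht ↦ (hu.2 t (hIJ ht)).mono hIJ⟩

lemma congr {I : Set ℝ} (hu : IsSolOn f X I u) (huv : EqOn v u I) : IsSolOn f X I v :=
  ⟨fun t ht ↦ huv ht ▸ hu.1 t ht, fun t ht ↦
    huv ht ▸ (hu.2 t ht).congr (fun _ hs ↦ huv hs) (huv ht)⟩

lemma continuousOn {I : Set ℝ} (hu : IsSolOn f X I u) : ContinuousOn u I := fun t ht ↦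
  (hu.2 t ht).continuousWithinAt

lemma hasDerivWithinAt_Ici {a b t : ℝ} (hu : IsSolOn f X (Icc a b) u) (ht : t ∈ Ico a b) :
    HasDerivWithinAt u (f (u t)) (Ici t) t :=
  (hu.2 t (Ico_subset_Icc_self ht)).mono_of_mem_nhdsWithin (Icc_mem_nhdsGE_of_mem ht)

lemma add_const {s : ℝ} (hu : IsSolOn f X (Ici 0) u) (hs : 0 ≤ s) :
    IsSolOn f X (Ici 0) fun t ↦ u (t + s) := by
  have hmaps : MapsTo (· + s) (Ici 0) (Ici 0) := fun t ht ↦ add_nonneg ht hs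
  exact ⟨fun t ht ↦ hu.1 _ (hmaps ht), fun t ht ↦ by
    simpa only [one_smul, Function.comp_def, id_eq] using
      (hu.2 _ (hmaps ht)).scomp t ((hasDerivWithinAt_id t _).add_const s) hmaps⟩

lemma exists_dist_le (hX : IsOpen X) (hf : ContDiffOn ℝ 1 f X) {T : ℝ}
    (hu : IsSolOn f X (Icc 0 T) u) :
    ∃ K : ℝ, ∃ δ > 0, ∀ v, IsSolOn f X (Icc 0 T) v → dist (u 0) (v 0) < δ →
      ∀ t ∈ Icc 0 T, dist (u t) (v t) ≤ dist (u 0) (v 0) * Real.exp (K * t) := by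
  have hK : IsCompact (u '' Icc 0 T) := isCompact_Icc.image_of_continuousOn hu.continuousOn
  obtain ⟨ε, hε, hεX⟩ := hK.exists_cthickening_subset_open hX (image_subset_iff.2 hu.1)
  obtain ⟨K, hlip⟩ : ∃ K, LipschitzOnWith K f (Metric.cthickening ε (u '' Icc 0 T)) := by
    refine LocallyLipschitzOn.exists_lipschitzOnWith_of_compact hK.cthickening fun x hx ↦ ?_
    obtain ⟨K, s, hs, h⟩ := (hf.contDiffAt (hX.mem_nhds (hεX hx))).exists_lipschitzOnWith
    exact ⟨K, s, mem_nhdsWithin_of_mem_nhds hs, h⟩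
  refine ⟨K, ε / Real.exp (K * T), div_pos hε (Real.exp_pos _), fun v hv hv0 ↦ ?_⟩
  have hle {t : ℝ} (ht : t ∈ Icc 0 T) (hnear : ∀ s ∈ Ico 0 t, dist (u s) (v s) < ε) :
      dist (u t) (v t) ≤ dist (u 0) (v 0) * Real.exp (K * t) := by
    have hu' := hu.mono (Icc_subset_Icc_right ht.2)
    have hv' := hv.mono (Icc_subset_Icc_right ht.2)
    have hmem (s) (hs : s ∈ Ico 0 t) : u s ∈ u '' Icc 0 T :=
      mem_image_of_mem u ⟨hs.1, hs.2.le.trans ht.2⟩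
    simpa only [sub_zero] using dist_le_of_trajectories_ODE_of_mem (v := fun _ ↦ f)
      (fun _ _ ↦ hlip) hu'.continuousOn (fun s hs ↦ hu'.hasDerivWithinAt_Ici hs)
      (fun s hs ↦ Metric.self_subset_cthickening _ (hmem s hs)) hv'.continuousOn
      (fun s hs ↦ hv'.hasDerivWithinAt_Ici hs)
      (fun s hs ↦ Metric.mem_cthickening_of_dist_le _ _ _ _ (hmem s hs)
        ((dist_comm _ _).trans_le (hnear s hs).le)) le_rfl t ⟨ht.1, le_rfl⟩
  have hnear : MapsTo (fun t ↦ dist (u t) (v t)) (Icc 0 T) (Iio ε) :=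
    mapsTo_Icc_of_forall_mapsTo_Ico (continuous_dist.comp_continuousOn
      (hu.continuousOn.prodMk hv.continuousOn)) isOpen_Iio fun t ht h ↦
      calc dist (u t) (v t) ≤ dist (u 0) (v 0) * Real.exp (K * t) := hle ht h
        _ ≤ dist (u 0) (v 0) * Real.exp (K * T) := by gcongr; exact ht.2
        _ < ε := (lt_div_iff₀ (Real.exp_pos _)).1 hv0
  exact fun t ht ↦ hle ht fun s hs ↦ hnear ⟨hs.1, hs.2.le.trans ht.2⟩

lemma eqOn (hX : IsOpen X) (hf : ContDiffOn ℝ 1 f X) (hu : IsSolOn f X (Ici 0) u)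
    (hv : IsSolOn f X (Ici 0) v) (h0 : u 0 = v 0) : EqOn u v (Ici 0) := fun T hT ↦ by
  obtain ⟨K, δ, hδ, h⟩ := (hu.mono (I := Icc 0 T) Icc_subset_Ici_self).exists_dist_le hX hf
  refine dist_le_zero.1 ((h v (hv.mono Icc_subset_Ici_self) (by rwa [h0, dist_self]) T
    ⟨hT, le_rfl⟩).trans_eq ?_)
  rw [h0, dist_self, zero_mul]

end IsSolOn

/-- The semiflow `φ` on `X` is generated by the vector field `f`: its trajectories solve
`ẋ = f x`. -/
def IsGeneratedBy (φ : Flow ℝ≥0 X) (f : (Fin n → ℝ) → (Fin n → ℝ)) : Prop :=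
  ∀ x, IsSolOn f X (Ici 0) fun t ↦ φ t.toNNReal x

lemma continuous_of_isSolOn (hX : IsOpen X) (hf : ContDiffOn ℝ 1 f X) {γ : X → ℝ → Fin n → ℝ}
    (hγ : ∀ x, IsSolOn f X (Ici 0) (γ x)) (hγ0 : ∀ x : X, γ x 0 = x) :
    Continuous fun z : ℝ≥0 × X ↦ γ z.2 z.1 := by
  refine continuous_iff_continuousAt.2 fun ⟨T, x⟩ ↦ ?_
  obtain ⟨K, δ, hδ, h⟩ :=
    ((hγ x).mono (I := Icc 0 (T + 1)) Icc_subset_Ici_self).exists_dist_le hX hf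
  have htime : Tendsto (fun z : ℝ≥0 × X ↦ γ x z.1) (𝓝 (T, x)) (𝓝 (γ x T)) :=
    ((hγ x).continuousOn.comp_continuous NNReal.continuous_coe fun t ↦ t.2).tendsto T |>.comp
      continuous_fst.continuousAt
  have hdist : Tendsto (fun z : ℝ≥0 × X ↦ dist x z.2) (𝓝 (T, x)) (𝓝 0) := by
    have : Continuous fun z : ℝ≥0 × X ↦ dist x z.2 := by fun_prop
    simpa only [dist_self] using this.tendsto (T, x)
  refine tendsto_of_tendsto_of_dist htime (squeeze_zero' (.of_forall fun _ ↦ dist_nonneg) ?_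
    (g := fun z ↦ dist x z.2 * Real.exp (K * z.1)) ?_)
  · have hnear : ∀ᶠ z : ℝ≥0 × X in 𝓝 (T, x), z.1 < T + 1 :=
      continuous_fst.continuousAt.eventually_lt_const (lt_add_one T)
    filter_upwards [hnear, hdist.eventually_lt_const hδ] with z hz hzδ
    have := h _ ((hγ z.2).mono Icc_subset_Ici_self)
      (by simpa only [hγ0, Subtype.dist_eq] using hzδ) z.1 ⟨z.1.2, mod_cast hz.le⟩
    simpa only [hγ0, Subtype.dist_eq] using this
  · have hexp : Continuous fun z : ℝ≥0 × X ↦ Real.exp (K * z.1) := by fun_prop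
    simpa only [zero_mul] using hdist.mul (hexp.tendsto (T, x))

lemma exists_isGeneratedBy (hX : IsOpen X) (hf : ContDiffOn ℝ 1 f X) {γ : X → ℝ → Fin n → ℝ}
    (hγ : ∀ x, IsSolOn f X (Ici 0) (γ x)) (hγ0 : ∀ x : X, γ x 0 = x) :
    ∃ φ : Flow ℝ≥0 X, IsGeneratedBy φ f ∧ ∀ t x, (φ t x : Fin n → ℝ) = γ x t := by
  let φ : Flow ℝ≥0 X :=
    { toFun t x := ⟨γ x t, (hγ x).1 t t.2⟩
      cont' := (continuous_of_isSolOn hX hf hγ hγ0).subtype_mk _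
      map_zero' x := Subtype.ext (hγ0 x)
      map_add' t s x := Subtype.ext <|
        ((hγ x).add_const s.2).eqOn hX hf (hγ _) (by simp [hγ0]) t.2 }
  refine ⟨φ, fun x ↦ (hγ x).congr fun t ht ↦ ?_, fun _ _ ↦ rfl⟩
  exact congr_arg (γ x) (Real.coe_toNNReal t ht)

end Solutions

/-! ### Comparison for cooperative vector fields -/

section Cooperative

variable {n : ℕ} {f : (Fin n → ℝ) → (Fin n → ℝ)} {X : Set (Fin n → ℝ)} {a b x : Fin n → ℝ}
  {u v : ℝ → Fin n → ℝ} {T : ℝ}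

lemma jacMat_mulVec (f : (Fin n → ℝ) → (Fin n → ℝ)) (x v : Fin n → ℝ) :
    Matrix.mulVec (jacMat f x) v = fderiv ℝ f x v :=
  LinearMap.toMatrix'_mulVec (fderiv ℝ f x : (Fin n → ℝ) →ₗ[ℝ] Fin n → ℝ) v

lemma coopVF.isMetzler (hcoop : coopVF f X) (hx : x ∈ X) : IsMetzler (jacMat f x) := hcoop x hx

lemma pconvex.segment_subset (hpc : pconvex X) (ha : a ∈ X) (hb : b ∈ X) (hab : a ≤ b) :
    segment ℝ a b ⊆ X := by
  rcases hab.eq_or_lt with rfl | hab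
  · simpa only [segment_same, singleton_subset_iff] using ha
  · exact hpc a ha b hb hab

lemma exists_mem_segment_map_sub_eq {E F : Type*} [NormedAddCommGroup E] [NormedSpace ℝ E]
    [NormedAddCommGroup F] [NormedSpace ℝ F] {f : E → F} {X : Set E} {a b : E}
    (hf : ∀ x ∈ X, DifferentiableAt ℝ f x) (hab : segment ℝ a b ⊆ X) (ℓ : F →L[ℝ] ℝ) :
    ∃ z ∈ segment ℝ a b, ℓ (f b - f a) = ℓ (fderiv ℝ f z (b - a)) := by
  obtain ⟨z, hz, h⟩ := domain_mvt (f := ℓ ∘ f) (f' := fun z ↦ ℓ ∘L fderiv ℝ f z)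
    (fun z hz ↦ (ℓ.hasFDerivAt.comp z (hf z (hab hz)).hasFDerivAt).hasFDerivWithinAt)
    (convex_segment a b) (left_mem_segment ℝ a b) (right_mem_segment ℝ a b)
  exact ⟨z, hz, (map_sub ℓ _ _).trans h⟩

lemma exists_forall_le_of_mem_segment {E : Type*} [NormedAddCommGroup E] [NormedSpace ℝ E]
    {X : Set E} {g : E → ℝ} (hg : ContinuousOn g X) {u v : ℝ → E} {s t : ℝ}
    (hu : ContinuousOn u (Icc s t)) (hv : ContinuousOn v (Icc s t))
    (huv : ∀ r ∈ Icc s t, segment ℝ (u r) (v r) ⊆ X) :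
    ∃ c, ∀ r ∈ Icc s t, ∀ z ∈ segment ℝ (u r) (v r), c ≤ g z := by
  let F (q : ℝ × ℝ) : E := AffineMap.lineMap (u q.1) (v q.1) q.2
  have hmem (r : ℝ) {q : ℝ} (hq : q ∈ Icc (0 : ℝ) 1) : F (r, q) ∈ segment ℝ (u r) (v r) := by
    rw [segment_eq_image_lineMap]
    exact mem_image_of_mem _ hq
  have hF : ContinuousOn F (Icc s t ×ˢ Icc 0 1) :=
    (hu.comp continuousOn_fst fun _ hq ↦ hq.1).lineMap
      (hv.comp continuousOn_fst fun _ hq ↦ hq.1) continuousOn_snd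
  obtain ⟨c, hc⟩ := ((isCompact_Icc.prod isCompact_Icc).image_of_continuousOn
    (hg.comp hF fun q hq ↦ huv _ hq.1 (hmem q.1 hq.2))).bddBelow
  refine ⟨c, fun r hr z hz ↦ ?_⟩
  rw [segment_eq_image_lineMap] at hz
  obtain ⟨q, hq, rfl⟩ := hz
  exact hc ⟨(r, q), ⟨hr, hq⟩, rfl⟩

variable (hX : IsOpen X) (hf : ContDiffOn ℝ 1 f X)
include hX hf

lemma coopVF.apply_le_apply (hcoop : coopVF f X) (hsub : segment ℝ a b ⊆ X) (hab : a ≤ b)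
    {i : Fin n} (hi : a i = b i) : f a i ≤ f b i := by
  obtain ⟨z, hz, h⟩ := exists_mem_segment_map_sub_eq (fun z hz ↦
    (hf.contDiffAt (hX.mem_nhds hz)).differentiableAt one_ne_zero) hsub (ContinuousLinearMap.proj i)
  have hle := (hcoop.isMetzler (hsub hz)).diag_mul_le_mulVec (sub_nonneg.2 hab) i
  rw [Pi.sub_apply, hi, sub_self, mul_zero, jacMat_mulVec] at hle
  exact sub_nonneg.1 (hle.trans_eq h.symm)

lemma coopVF.apply_lt_apply (hcoop : coopVF f X) (hsub : segment ℝ a b ⊆ X) (hab : a ≤ b)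
    {i : Fin n} (hi : a i = b i) (hpos : 0 < fderiv ℝ f a (b - a) i) : f a i < f b i := by
  by_contra! hba
  have hmax : IsLocalMaxOn (fun z ↦ f z i) (segment ℝ a b) a := by
    filter_upwards [self_mem_nhdsWithin] with z hz
    have hzb : segment ℝ z b ⊆ segment ℝ a b :=
      (convex_segment a b).segment_subset hz (right_mem_segment ℝ a b)
    obtain ⟨haz, hzb'⟩ := segment_subset_Icc hab hz
    exact (hcoop.apply_le_apply hX hf (hzb.trans hsub) hzb'
      (le_antisymm (hzb' i) (hi.symm.trans_le (haz i)))).trans hba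
  have hdiff : DifferentiableAt ℝ f a :=
    (hf.contDiffAt (hX.mem_nhds (hsub (left_mem_segment ℝ a b)))).differentiableAt one_ne_zero
  exact hpos.not_ge (hmax.hasFDerivWithinAt_nonpos
    (hasFDerivAt_pi'.1 hdiff.hasFDerivAt i).hasFDerivWithinAt
    (sub_mem_posTangentConeAt_of_segment_subset Subset.rfl))

variable (hcoop : coopVF f X) (hpc : pconvex X)
include hcoop hpc

namespace IsSolOn

lemma apply_lt_apply (hu : IsSolOn f X (Icc 0 T) u) (hv : IsSolOn f X (Icc 0 T) v)
    (huv : ∀ t ∈ Icc 0 T, u t ≤ v t) {i : Fin n} (hi : u 0 i < v 0 i) {t : ℝ} (ht : t ∈ Icc 0 T) :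
    u t i < v t i := by
  have hseg (t) (ht : t ∈ Icc 0 T) : segment ℝ (u t) (v t) ⊆ X :=
    hpc.segment_subset (hu.1 t ht) (hv.1 t ht) (huv t ht)
  have hdiag : ContinuousOn (fun z ↦ jacMat f z i i) X := continuousOn_pi.1
    ((hf.continuousOn_fderiv_of_isOpen hX le_rfl).clm_apply continuousOn_const) i
  obtain ⟨c, hc⟩ := exists_forall_le_of_mem_segment hdiag hu.continuousOn hv.continuousOn hseg
  have hderiv (s) (hs : s ∈ Ico 0 T) : c * (v s i - u s i) ≤ f (v s) i - f (u s) i := by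
    have hs' := Ico_subset_Icc_self hs
    obtain ⟨z, hz, h⟩ := exists_mem_segment_map_sub_eq (fun z hz ↦
      (hf.contDiffAt (hX.mem_nhds hz)).differentiableAt one_ne_zero) (hseg s hs')
      (ContinuousLinearMap.proj i)
    calc c * (v s i - u s i) ≤ jacMat f z i i * (v s - u s) i :=
          mul_le_mul_of_nonneg_right (hc s hs' z hz) (sub_nonneg.2 (huv s hs' i))
      _ ≤ Matrix.mulVec (jacMat f z) (v s - u s) i :=
          (hcoop.isMetzler (hseg s hs' hz)).diag_mul_le_mulVec (sub_nonneg.2 (huv s hs')) i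
      _ = f (v s) i - f (u s) i := by rw [jacMat_mulVec]; exact h.symm
  have hexp := mul_exp_le_of_mul_le_deriv_right (g := fun s ↦ v s i - u s i)
    ((continuousOn_pi.1 hv.continuousOn i).sub (continuousOn_pi.1 hu.continuousOn i))
    (fun s hs ↦ (hasDerivWithinAt_pi.1 (hv.hasDerivWithinAt_Ici hs) i).sub
      (hasDerivWithinAt_pi.1 (hu.hasDerivWithinAt_Ici hs) i)) hderiv ht
  exact sub_pos.1 ((mul_pos (sub_pos.2 hi) (Real.exp_pos _)).trans_le hexp)

lemma strLt_of_strLt (hu : IsSolOn f X (Icc 0 T) u) (hv : IsSolOn f X (Icc 0 T) v)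
    (h0 : strLt (u 0) (v 0)) {t : ℝ} (ht : t ∈ Icc 0 T) : strLt (u t) (v t) := by
  have huv : ContinuousOn (fun t ↦ (u t, v t)) (Icc 0 T) := hu.continuousOn.prodMk hv.continuousOn
  refine mapsTo_Icc_of_forall_mapsTo_Ico huv isOpen_setOf_strLt (fun s hs hlt ↦ ?_) ht
  rcases hs.1.eq_or_lt with rfl | hs0
  · exact h0
  have hsT : Icc 0 s ⊆ Icc 0 T := Icc_subset_Icc_right hs.2
  have hle : MapsTo (fun t ↦ (u t, v t)) (Icc 0 s) {z | z.1 ≤ z.2} := by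
    rw [← closure_Ico hs0.ne, ← (isClosed_le continuous_fst continuous_snd).closure_eq]
    refine MapsTo.closure_of_continuousOn (fun r hr ↦ (hlt hr).le) ?_
    rw [closure_Ico hs0.ne]
    exact huv.mono hsT
  exact fun i ↦ (hu.mono hsT).apply_lt_apply hX hf hcoop hpc (hv.mono hsT) hle (h0 i) ⟨hs.1, le_rfl⟩

lemma strLt_of_lt (hirr : ∀ x ∈ X, matIrred (jacMat f x)) (hu : IsSolOn f X (Icc 0 T) u)
    (hv : IsSolOn f X (Icc 0 T) v) (huv : ∀ t ∈ Icc 0 T, u t ≤ v t) (h0 : u 0 < v 0) {t : ℝ}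
    (ht : t ∈ Ioo 0 T) : strLt (u t) (v t) := by
  by_contra hnot
  obtain ⟨i, hi⟩ : ∃ i, v t i ≤ u t i := by simpa only [strLt, not_forall, not_lt] using hnot
  have ht' := Ioo_subset_Icc_self ht
  obtain ⟨-, j, hj⟩ := Pi.lt_def.1 h0
  have hne : v t - u t ≠ 0 := fun h ↦
    (hu.apply_lt_apply hX hf hcoop hpc hv huv hj ht').ne' (sub_eq_zero.1 (congr_fun h j))
  obtain ⟨k, hk, hpos⟩ := (hcoop.isMetzler (hu.1 t ht')).exists_mulVec_pos (hirr _ (hu.1 t ht'))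
    (sub_nonneg.2 (huv t ht')) hne ⟨i, sub_eq_zero.2 (hi.antisymm (huv t ht' i))⟩
  rw [jacMat_mulVec] at hpos
  have hlt := hcoop.apply_lt_apply hX hf (hpc.segment_subset (hu.1 t ht') (hv.1 t ht') (huv t ht'))
    (huv t ht') (sub_eq_zero.1 hk).symm hpos
  have hmin : IsLocalMin (fun s ↦ v s k - u s k) t := by
    filter_upwards [Icc_mem_nhds ht.1 ht.2] with s hs
    exact hk.trans_le (sub_nonneg.2 (huv s hs k))
  refine hlt.ne' (sub_eq_zero.1 (hmin.hasDerivAt_eq_zero ?_))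
  have hnhds := Icc_mem_nhds ht.1 ht.2
  exact (hasDerivAt_pi.1 ((hv.2 t ht').hasDerivAt hnhds) k).sub
    (hasDerivAt_pi.1 ((hu.2 t ht').hasDerivAt hnhds) k)

end IsSolOn

namespace IsGeneratedBy

variable {φ : Flow ℝ≥0 X} (hφ : IsGeneratedBy φ f)
include hφ

lemma strLt_flow_of_strLt {x y : X} (hxy : strLt (x : Fin n → ℝ) y) (t : ℝ≥0) :
    strLt (φ t x : Fin n → ℝ) (φ t y) := by
  have hu (x : X) := (hφ x).mono (I := Icc 0 (t : ℝ)) Icc_subset_Ici_self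
  simpa only [Real.toNNReal_coe] using (hu x).strLt_of_strLt hX hf hcoop hpc (hu y)
    (by simpa only [Real.toNNReal_zero, φ.map_zero_apply] using hxy) ⟨t.coe_nonneg, le_rfl⟩

lemma monotone (t : ℝ≥0) : Monotone (φ t) := fun x y hxy ↦ by
  obtain ⟨u, -, -, hux, hu⟩ := exists_seq_strLt_tendsto (x := x) hX univ_mem
  refine le_of_tendsto' (α := Fin n → ℝ) (((continuous_subtype_val.comp
    (φ.continuous_toFun t)).tendsto x).comp hu) fun m ↦ ?_
  exact (hφ.strLt_flow_of_strLt hX hf hcoop hpc (fun i ↦ (hux m i).trans_le (hxy i)) t).le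

lemma strLt_flow_of_lt (hirr : ∀ x ∈ X, matIrred (jacMat f x)) {x y : X} (hxy : x < y) {t : ℝ≥0}
    (ht : t ≠ 0) : strLt (φ t x : Fin n → ℝ) (φ t y) := by
  have hu (x : X) := (hφ x).mono (I := Icc 0 (t + 1 : ℝ)) Icc_subset_Ici_self
  simpa only [Real.toNNReal_coe] using (hu x).strLt_of_lt hX hf hcoop hpc hirr (hu y)
    (fun s _ ↦ hφ.monotone hX hf hcoop hpc _ hxy.le)
    (by simpa only [Real.toNNReal_zero, φ.map_zero_apply, Subtype.coe_lt_coe] using hxy)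
    ⟨NNReal.coe_pos.2 (pos_iff_ne_zero.2 ht), lt_add_one _⟩

theorem stronglyOrderPreserving (hirr : ∀ x ∈ X, matIrred (jacMat f x)) :
    StronglyOrderPreserving φ where
  monotone := hφ.monotone hX hf hcoop hpc
  exists_eventually_le x y hxy := by
    have hcont : Continuous fun z : X × X ↦ ((φ 1 z.1 : Fin n → ℝ), (φ 1 z.2 : Fin n → ℝ)) := by
      fun_prop
    refine ⟨1, ?_⟩
    rw [← nhds_prod_eq]
    exact (hcont.tendsto (x, y)).eventually (isOpen_setOf_strLt.mem_nhds
      (hφ.strLt_flow_of_lt hX hf hcoop hpc hirr hxy one_ne_zero)) |>.mono fun z hz ↦ hz.le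

end IsGeneratedBy

end Cooperative

/-! ### Repulsion at a limit of equilibria -/

section LinearFunctional

variable {n : ℕ} {ℓ : (Fin n → ℝ) →L[ℝ] ℝ}

lemma map_eq_sum_mul_map_single (v : Fin n → ℝ) : ℓ v = ∑ k, v k * ℓ (Pi.single k 1) := by
  conv_lhs => rw [← Finset.univ_sum_single v, map_sum]
  refine Finset.sum_congr rfl fun k _ ↦ ?_
  rw [← smul_eq_mul, ← map_smul, ← Pi.single_smul, smul_eq_mul, mul_one]

lemma map_nonneg_of_forall_single_nonneg (hℓ : ∀ k, 0 ≤ ℓ (Pi.single k 1)) {v : Fin n → ℝ}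
    (hv : 0 ≤ v) : 0 ≤ ℓ v := by
  rw [map_eq_sum_mul_map_single]
  exact Finset.sum_nonneg fun k _ ↦ mul_nonneg (hv k) (hℓ k)

lemma exists_pos_mul_norm_le_map (hℓ : ∀ k, 0 < ℓ (Pi.single k 1)) :
    ∃ c > 0, ∀ v, 0 ≤ v → c * ‖v‖ ≤ ℓ v := by
  have hev : ∀ᶠ c : ℝ in 𝓝[>] 0, ∀ k, c < ℓ (Pi.single k 1) :=
    eventually_all.2 fun k ↦ nhdsWithin_le_nhds (Iio_mem_nhds (hℓ k))
  obtain ⟨c, hc, hc0⟩ := (hev.and self_mem_nhdsWithin).exists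
  refine ⟨c, hc0, fun v hv ↦ ?_⟩
  have hℓv := map_nonneg_of_forall_single_nonneg (fun k ↦ (hℓ k).le) hv
  refine (le_div_iff₀' hc0).1 ((pi_norm_le_iff_of_nonneg (div_nonneg hℓv hc0.le)).2 fun i ↦ ?_)
  rw [le_div_iff₀ hc0, Real.norm_of_nonneg (hv i)]
  calc v i * c ≤ v i * ℓ (Pi.single i 1) := mul_le_mul_of_nonneg_left (hc i).le (hv i)
    _ ≤ ∑ k, v k * ℓ (Pi.single k 1) := Finset.single_le_sum
        (f := fun k ↦ v k * ℓ (Pi.single k 1)) (fun k _ ↦ mul_nonneg (hv k) (hℓ k).le)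
        (Finset.mem_univ i)
    _ = ℓ v := (map_eq_sum_mul_map_single v).symm

end LinearFunctional

section EquilibriumSets

variable {n : ℕ} {K : Set (Fin n → ℝ)} {e w : Fin n → ℝ}

lemma not_strLt_smul_of_mem_tangentConeAt [Nonempty (Fin n)] (hK : IsAntichain (· ≤ ·) K)
    (he : e ∈ K) (hw : w ∈ tangentConeAt ℝ K e) (r : ℝ) : ¬ strLt 0 (r • w) := fun hrw ↦ by
  obtain ⟨ι, l, hl, c, d, -, hdK, hcd⟩ := exists_fun_of_mem_tangentConeAt hw
  have hev : ∀ᶠ m in l, strLt 0 (r • c m • d m) :=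
    (tendsto_const_nhds.prodMk_nhds (hcd.const_smul r)).eventually (isOpen_setOf_strLt.mem_nhds hrw)
  obtain ⟨m, hm, hpos⟩ := (hdK.and hev).exists
  rw [smul_smul] at hpos
  have hd : d m = 0 := by
    rcases le_total 0 (r * c m) with hrc | hrc
    · exact left_eq_add.1 (hK.eq he hm (le_add_of_nonneg_right fun i ↦
        (pos_of_mul_pos_right (hpos i) hrc).le))
    · exact add_eq_left.1 (hK.eq hm he (add_le_of_nonpos_right fun i ↦
        (neg_of_mul_pos_right (hpos i) hrc).le))
  rw [hd, smul_zero] at hpos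
  exact lt_irrefl _ (hpos (Classical.arbitrary _))

-- A direction along which zeros of `f` accumulate at `e` is killed by the Jacobian, and the
-- antichain condition forces it to have entries of both signs.
lemma coopVF.exists_forall_single_pos_of_accPt {f : (Fin n → ℝ) → (Fin n → ℝ)}
    {X : Set (Fin n → ℝ)} (hcoop : coopVF f X) (hf : DifferentiableAt ℝ f e) (heX : e ∈ X)
    (hirr : matIrred (jacMat f e)) (hK : IsAntichain (· ≤ ·) K) (hzero : ∀ k ∈ K, f k = 0)
    (he : e ∈ K) (hacc : AccPt e (𝓟 K)) :
    ∃ ℓ : (Fin n → ℝ) →L[ℝ] ℝ, ∀ k, 0 < ℓ (Pi.single k 1) ∧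
      0 < ℓ (fderiv ℝ f e (Pi.single k 1)) := by
  obtain ⟨w, hw, hw0⟩ := tangentConeAt_nonempty_of_properSpace (𝕜 := ℝ) hacc
  obtain ⟨i, -⟩ := Function.ne_iff.1 hw0
  have : Nonempty (Fin n) := ⟨i⟩
  have hderiv : fderiv ℝ f e w = 0 :=
    hf.hasFDerivAt.hasFDerivWithinAt.unique_on
      ((hasFDerivWithinAt_const 0 e K).congr hzero (hzero e he)) hw
  have hA := hcoop.isMetzler heX
  have hpos (r : ℝ) (hr : r ≠ 0) : ∃ j, r * w j < 0 := by
    by_contra! h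
    refine not_strLt_smul_of_mem_tangentConeAt hK he hw r
      (hA.pos_of_mulVec_nonpos hirr h (smul_ne_zero hr hw0)
        ((jacMat_mulVec f e _).trans ?_).le)
    rw [map_smul, hderiv, smul_zero]
  obtain ⟨i, hi⟩ := hpos (-1) (by norm_num)
  obtain ⟨j, hj⟩ := hpos 1 one_ne_zero
  simpa only [jacMat_mulVec] using
    hA.exists_forall_single_pos hirr ((jacMat_mulVec f e w).trans hderiv)
      (by linarith : 0 < w i) (by linarith : w j < 0)

end EquilibriumSets

section Repulsion

variable {n : ℕ} {f : (Fin n → ℝ) → (Fin n → ℝ)} {X : Set (Fin n → ℝ)} {φ : Flow ℝ≥0 X}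
  {ℓ : (Fin n → ℝ) →L[ℝ] ℝ}

lemma exists_mul_map_sub_le_map_sub (hX : IsOpen X) (hf : ContDiffOn ℝ 1 f X) {e : Fin n → ℝ}
    (he : e ∈ X) (hℓ : ∀ k, 0 < ℓ (fderiv ℝ f e (Pi.single k 1))) :
    ∃ s > 0, ∃ r > 0, ∀ a ∈ Metric.ball e r, ∀ b ∈ Metric.ball e r, a ≤ b →
      s * ℓ (b - a) ≤ ℓ (f b - f a) := by
  have hs : ∀ᶠ s : ℝ in 𝓝[>] 0, ∀ k, s * ℓ (Pi.single k 1) < ℓ (fderiv ℝ f e (Pi.single k 1)) := by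
    refine eventually_all.2 fun k ↦ nhdsWithin_le_nhds ?_
    have hcont : Continuous fun s : ℝ ↦ s * ℓ (Pi.single k 1) := by fun_prop
    exact (hcont.tendsto 0).eventually_lt_const (by simpa only [zero_mul] using hℓ k)
  obtain ⟨s, hs, hs0⟩ := (hs.and self_mem_nhdsWithin).exists
  have hnear : ∀ᶠ z in 𝓝 e, z ∈ X ∧
      ∀ k, s * ℓ (Pi.single k 1) < ℓ (fderiv ℝ f z (Pi.single k 1)) := by
    refine (hX.eventually_mem he).and (eventually_all.2 fun k ↦ ?_)
    have hcont : ContinuousAt (fderiv ℝ f) e :=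
      (hf.continuousOn_fderiv_of_isOpen hX le_rfl).continuousAt (hX.mem_nhds he)
    exact (ℓ.continuous.continuousAt.comp (hcont.clm_apply continuousAt_const)).eventually_const_lt
      (hs k)
  obtain ⟨r, hr, hball⟩ := Metric.eventually_nhds_iff_ball.1 hnear
  refine ⟨s, hs0, r, hr, fun a ha b hb hab ↦ ?_⟩
  have hseg := (convex_ball e r).segment_subset ha hb
  obtain ⟨z, hz, h⟩ := exists_mem_segment_map_sub_eq (fun z hz ↦
    (hf.contDiffAt (hX.mem_nhds hz)).differentiableAt one_ne_zero)
    (fun z hz ↦ (hball z (hseg hz)).1) ℓ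
  rw [h, ← sub_nonneg]
  exact map_nonneg_of_forall_single_nonneg (ℓ := ℓ ∘L fderiv ℝ f z - s • ℓ)
    (fun k ↦ (sub_pos.2 ((hball z (hseg hz)).2 k)).le) (sub_nonneg.2 hab)

lemma IsGeneratedBy.map_sub_mul_exp_le (hφ : IsGeneratedBy φ f) {x y : X} {s : ℝ} {T : ℝ≥0}
    (h : ∀ t ∈ Icc 0 T, s * ℓ ((φ t y : Fin n → ℝ) - φ t x) ≤ ℓ (f (φ t y) - f (φ t x))) :
    ℓ ((y : Fin n → ℝ) - x) * Real.exp (s * T) ≤ ℓ ((φ T y : Fin n → ℝ) - φ T x) := by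
  have hx := (hφ x).mono (I := Icc 0 (T : ℝ)) Icc_subset_Ici_self
  have hy := (hφ y).mono (I := Icc 0 (T : ℝ)) Icc_subset_Ici_self
  simpa using mul_exp_le_of_mul_le_deriv_right (c := s)
    (ℓ.continuous.comp_continuousOn (hy.continuousOn.sub hx.continuousOn))
    (fun t ht ↦ ℓ.hasFDerivAt.comp_hasDerivWithinAt t
      ((hy.hasDerivWithinAt_Ici ht).sub (hx.hasDerivWithinAt_Ici ht)))
    (fun t ht ↦ h t.toNNReal ⟨zero_le, Real.toNNReal_le_iff_le_coe.2 ht.2.le⟩)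
    ⟨T.coe_nonneg, le_rfl⟩

lemma exists_eventually_dist_lt_dist_flow (hX : IsOpen X) (hf : ContDiffOn ℝ 1 f X)
    (hφ : IsGeneratedBy φ f) (hmono : ∀ t, Monotone (φ t)) {e : X} (he : ∀ t, φ t e = e)
    (hℓ : ∀ k, 0 < ℓ (Pi.single k 1)) (hℓ' : ∀ k, 0 < ℓ (fderiv ℝ f e (Pi.single k 1))) :
    ∃ T, ∀ᶠ z in 𝓝 (e, e), z.1 < z.2 → dist z.1 z.2 < dist (φ T z.1) (φ T z.2) := by
  obtain ⟨s, hs, r, hr, hgrow⟩ := exists_mul_map_sub_le_map_sub hX hf e.2 hℓ'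
  obtain ⟨c, hc, hnorm⟩ := exists_pos_mul_norm_le_map hℓ
  obtain ⟨T, hT⟩ : ∃ T : ℝ≥0, ‖ℓ‖ < c * Real.exp (s * T) :=
    (((Real.tendsto_exp_atTop.comp (NNReal.tendsto_coe_atTop.2 tendsto_id |>.const_mul_atTop hs)
      ).const_mul_atTop hc).eventually_gt_atTop ‖ℓ‖).exists
  have hstay : ∀ᶠ x in 𝓝 e, ∀ t ∈ Icc 0 T,
      (φ t x : Fin n → ℝ) ∈ Metric.ball (e : Fin n → ℝ) r := by
    refine isCompact_Icc.eventually_forall_of_forall_eventually fun t _ ↦ ?_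
    have hcont : Continuous fun z : X × ℝ≥0 ↦ (φ z.2 z.1 : Fin n → ℝ) := by fun_prop
    exact hcont.tendsto (e, t) |>.eventually_mem (by rw [he]; exact Metric.ball_mem_nhds _ hr)
  refine ⟨T, ?_⟩
  filter_upwards [hstay.prod_nhds hstay] with ⟨x, y⟩ ⟨hx, hy⟩ hxy
  have hexp := hφ.map_sub_mul_exp_le (x := x) (y := y) (T := T) (s := s) (ℓ := ℓ)
    fun t ht ↦ hgrow _ (hx t ht) _ (hy t ht) (hmono t hxy.le)
  refine lt_of_mul_lt_mul_left ?_ (norm_nonneg ℓ)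
  calc ‖ℓ‖ * dist x y < c * Real.exp (s * T) * dist x y :=
        mul_lt_mul_of_pos_right hT (dist_pos.2 hxy.ne)
    _ = c * ‖(y : Fin n → ℝ) - x‖ * Real.exp (s * T) := by
        rw [Subtype.dist_eq, dist_comm, dist_eq_norm, mul_right_comm]
    _ ≤ ℓ ((y : Fin n → ℝ) - x) * Real.exp (s * T) :=
        mul_le_mul_of_nonneg_right (hnorm _ (sub_nonneg.2 hxy.le)) (Real.exp_pos _).le
    _ ≤ ℓ ((φ T y : Fin n → ℝ) - φ T x) := hexp
    _ ≤ ‖ℓ‖ * ‖(φ T y : Fin n → ℝ) - φ T x‖ := (le_abs_self _).trans (ℓ.le_opNorm _)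
    _ = ‖ℓ‖ * dist (φ T x) (φ T y) := by rw [Subtype.dist_eq, dist_comm, dist_eq_norm]

end Repulsion

section Convergence

lemma frequently_atTop_forall_ge_le {D : ℝ≥0 → ℝ} (hD : Continuous D) (hpos : ∀ t, 0 < D t)
    (hlim : Tendsto D atTop (𝓝 0)) : ∃ᶠ t in atTop, ∀ s ≥ t, D s ≤ D t := by
  refine frequently_atTop.2 fun R ↦ ?_
  have hev : ∀ᶠ s in cocompact ℝ≥0 ⊓ 𝓟 (Ici R), D s ≤ D R :=
    ((hlim.mono_left cocompact_le_atTop).eventually_le_const (hpos R)).filter_mono inf_le_left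
  obtain ⟨t, ht, hmax⟩ := hD.continuousOn.exists_isMaxOn' isClosed_Ici self_mem_Ici hev
  exact ⟨t, ht, fun s hs ↦ hmax (ht.trans hs)⟩

variable {n : ℕ} {X : Set (Fin n → ℝ)} {f : (Fin n → ℝ) → (Fin n → ℝ)} {φ : Flow ℝ≥0 X} {x y : X}

lemma IsGeneratedBy.apply_eq_zero {p : X} (hφ : IsGeneratedBy φ f) (hp : ∀ t, φ t p = p) :
    f p = 0 := by
  have h := (hφ p).2 0 self_mem_Ici
  simp only [hp] at h
  exact (uniqueDiffOn_Ici (0 : ℝ) 0 self_mem_Ici).eq_deriv _ h (hasDerivWithinAt_const _ _ _)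

lemma exists_ultrafilter_tendsto_dist_flow_le {α : Type*} [MetricSpace α] {φ : Flow ℝ≥0 α}
    {x y : α} (hφ : HasPrecompactOrbits φ) (hne : ∀ t, φ t x ≠ φ t y)
    (hlim : Tendsto (fun t ↦ dist (φ t x) (φ t y)) atTop (𝓝 0)) :
    ∃ e ∈ ω⁺ φ {x}, ∃ U : Ultrafilter ℝ≥0, Tendsto (fun t ↦ (φ t x, φ t y)) U (𝓝 (e, e)) ∧
      ∀ᶠ t in U, ∀ s ≥ t, dist (φ s x) (φ s y) ≤ dist (φ t x) (φ t y) := by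
  have hD : Continuous fun t ↦ dist (φ t x) (φ t y) := by fun_prop
  have := frequently_iff_neBot.1
    (frequently_atTop_forall_ge_le hD (fun t ↦ dist_pos.2 (hne t)) hlim)
  obtain ⟨U, hU⟩ := Ultrafilter.exists_le (atTop ⊓ 𝓟 {t : ℝ≥0 | ∀ s ≥ t,
    dist (φ s x) (φ s y) ≤ dist (φ t x) (φ t y)})
  obtain ⟨e, he, hxe⟩ := hφ.exists_mem_omegaLimit_tendsto x (hU.trans inf_le_left)
  have hye : Tendsto (φ · y) U (𝓝 e) :=
    tendsto_of_tendsto_of_dist hxe (hlim.mono_left (hU.trans inf_le_left))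
  exact ⟨e, he, U, hxe.prodMk_nhds hye, le_principal_iff.1 (hU.trans inf_le_right)⟩

lemma StronglyOrderPreserving.tendsto_dist_flow {α : Type*} [PseudoMetricSpace α]
    [PartialOrder α] [OrderClosedTopology α] {φ : Flow ℝ≥0 α} {x y : α}
    (h : StronglyOrderPreserving φ) (hφ : HasPrecompactOrbits φ) (hxy : x < y)
    (heq : ω⁺ φ {x} = ω⁺ φ {y}) : Tendsto (fun t ↦ dist (φ t x) (φ t y)) atTop (𝓝 0) := by
  refine (tendsto_iff_ultrafilter _ _ _).2 fun U hU ↦ ?_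
  obtain ⟨e, he, hx⟩ := hφ.exists_mem_omegaLimit_tendsto x hU
  simpa only [dist_self] using
    hx.dist (h.tendsto_of_mem_omegaLimit_of_lt hφ hxy hU hx (heq ▸ he))

namespace IsGeneratedBy

variable (hφ : IsGeneratedBy φ f) (hX : IsOpen X) (hf : ContDiffOn ℝ 1 f X)
  (hcoop : coopVF f X) (hpc : pconvex X) (hirr : ∀ x ∈ X, matIrred (jacMat f x))
  (hK : HasPrecompactOrbits φ)
include hφ hX hf hcoop hpc hirr hK

lemma exists_forall_single_pos_of_mem_omegaLimit (hxy : x < y) (heq : ω⁺ φ {x} = ω⁺ φ {y})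
    (hnt : (ω⁺ φ {x}).Nontrivial) {e : X} (he : e ∈ ω⁺ φ {x}) :
    ∃ ℓ : (Fin n → ℝ) →L[ℝ] ℝ, ∀ k, 0 < ℓ (Pi.single k 1) ∧
      0 < ℓ (fderiv ℝ f e (Pi.single k 1)) := by
  have hsop := hφ.stronglyOrderPreserving hX hf hcoop hpc hirr
  have hanti : IsAntichain (· ≤ ·) ((↑) '' ω⁺ φ {x} : Set (Fin n → ℝ)) := by
    rintro _ ⟨p, hp, rfl⟩ _ ⟨q, hq, rfl⟩ hne hpq
    exact hne (congr_arg _ (hsop.eq_of_le_of_mem_omegaLimit hp hq hpq))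
  have hzero : ∀ k ∈ ((↑) '' ω⁺ φ {x} : Set (Fin n → ℝ)), f k = 0 := by
    rintro _ ⟨p, hp, rfl⟩
    exact hφ.apply_eq_zero (hsop.flow_eq_of_omegaLimit_eq hK hxy heq hp)
  have hperf : Preperfect ((↑) '' ω⁺ φ {x} : Set (Fin n → ℝ)) :=
    ((hK.isPreconnected_omegaLimit x).image _ continuous_subtype_val.continuousOn
      ).preperfect_of_nontrivial (hnt.image Subtype.val_injective)
  exact hcoop.exists_forall_single_pos_of_accPt
    ((hf.contDiffAt (hX.mem_nhds e.2)).differentiableAt one_ne_zero) e.2 (hirr e e.2) hanti hzero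
    (mem_image_of_mem _ he) (hperf _ (mem_image_of_mem _ he))

theorem exists_omegaLimit_eq_singleton (hxy : x < y) (heq : ω⁺ φ {x} = ω⁺ φ {y}) :
    ∃ p, ω⁺ φ {x} = {p} := by
  refine (hK.nonempty_omegaLimit x).exists_eq_singleton_or_nontrivial.resolve_right fun hnt ↦ ?_
  have hsop := hφ.stronglyOrderPreserving hX hf hcoop hpc hirr
  have hlt (t : ℝ≥0) : φ t x < φ t y := by
    rcases eq_or_ne t 0 with rfl | ht
    · simpa only [φ.map_zero_apply] using hxy
    · have : Nonempty (Fin n) := (Pi.lt_def.1 hxy).2.nonempty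
      exact (hφ.strLt_flow_of_lt hX hf hcoop hpc hirr hxy ht).lt
  obtain ⟨e, he, U, hU, hmax⟩ := exists_ultrafilter_tendsto_dist_flow_le hK (fun t ↦ (hlt t).ne)
    (hsop.tendsto_dist_flow hK hxy heq)
  obtain ⟨ℓ, hℓ⟩ := hφ.exists_forall_single_pos_of_mem_omegaLimit hX hf hcoop hpc hirr hK hxy heq
    hnt he
  obtain ⟨T, hT⟩ := exists_eventually_dist_lt_dist_flow hX hf hφ hsop.monotone
    (hsop.flow_eq_of_omegaLimit_eq hK hxy heq he) (fun k ↦ (hℓ k).1) (fun k ↦ (hℓ k).2)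
  obtain ⟨t, ht, hTt⟩ := (hmax.and (hU.eventually hT)).exists
  have := hTt (hlt t)
  rw [← φ.map_add, ← φ.map_add] at this
  exact this.not_ge (ht _ le_add_self)

end IsGeneratedBy

end Convergence

lemma omegaSet_eq_image_omegaLimit {n : ℕ} {X : Set (Fin n → ℝ)} {φ : Flow ℝ≥0 X}
    {γ : ℝ → Fin n → ℝ} {x : X} (hγ : ∀ t : ℝ≥0, (φ t x : Fin n → ℝ) = γ t) :
    omegaSet X γ = (↑) '' ω⁺ φ {x} := by
  ext p
  constructor
  · rintro ⟨hp, t, ht, htp⟩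
    refine ⟨⟨p, hp⟩, (mem_omegaLimit_singleton_iff_mapClusterPt ..).2 ?_, rfl⟩
    refine MapClusterPt.of_comp (φ := fun k ↦ (t k).toNNReal)
      (tendsto_real_toNNReal_atTop.comp ht) (Tendsto.mapClusterPt (tendsto_subtype_rng.2 ?_))
    refine htp.congr' ((ht.eventually_ge_atTop 0).mono fun k hk ↦ ?_)
    simp only [Function.comp_apply, hγ, Real.coe_toNNReal _ hk]
  · rintro ⟨p, hp, rfl⟩
    obtain ⟨t, htp, ht⟩ := ((mem_omegaLimit_singleton_iff_mapClusterPt ..).1 hp).exists_seq_tendsto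
    refine ⟨p.2, fun k ↦ t k, NNReal.tendsto_coe_atTop.2 ht, ?_⟩
    simpa only [Function.comp_def, hγ] using tendsto_subtype_rng.1 htp

/-- generic convergence for cooperative irreducible systems. -/
theorem stmt_3 {n : ℕ} {X : Set (Fin n → ℝ)} (hX : IsOpen X) (hpc : pconvex X)
    {f : (Fin n → ℝ) → (Fin n → ℝ)} (hf : ContDiffOn ℝ 1 f X) (hcoop : coopVF f X)
    (hirr : ∀ x ∈ X, matIrred (jacMat f x))
    (γ : (Fin n → ℝ) → ℝ → (Fin n → ℝ))
    (hsol : ∀ x ∈ X, IsSolOn f X (Set.Ici 0) (γ x) ∧ γ x 0 = x ∧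
      IsCompact (closure (γ x '' Set.Ici 0)) ∧ closure (γ x '' Set.Ici 0) ⊆ X) :
    ∃ Y : Set (Fin n → ℝ), Y ⊆ X ∧ IsOpen Y ∧ X ⊆ closure Y ∧
      ∀ x ∈ Y, ∃ p : Fin n → ℝ, omegaSet X (γ x) = {p} := by
  obtain ⟨φ, hφ, hφγ⟩ := exists_isGeneratedBy hX hf (γ := fun x ↦ γ x)
    (fun x ↦ (hsol x x.2).1) fun x ↦ (hsol x x.2).2.1
  have hK : HasPrecompactOrbits φ := fun x ↦ by
    obtain ⟨-, -, hcomp, hsub⟩ := hsol x x.2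
    exact ⟨_, IsInducing.subtypeVal.isCompact_preimage' hcomp
      (hsub.trans_eq Subtype.range_coe.symm), fun t ↦ subset_closure ⟨t, t.2, (hφγ t x).symm⟩⟩
  have hdense := dense_interior_setOf_omegaLimit_eq_singleton
    (hφ.stronglyOrderPreserving hX hf hcoop hpc hirr) hK hX fun _ _ ↦
      hφ.exists_omegaLimit_eq_singleton hX hf hcoop hpc hirr hK
  refine ⟨(↑) '' interior {x : X | ∃ p, ω⁺ φ {x} = {p}}, Subtype.coe_image_subset _ _,
    hX.isOpenMap_subtype_val _ isOpen_interior, Subtype.dense_iff.1 hdense, ?_⟩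
  rintro _ ⟨x, hx, rfl⟩
  obtain ⟨p, hp⟩ := interior_subset hx
  exact ⟨p, by rw [omegaSet_eq_image_omegaLimit (hφγ · x), hp, image_singleton]⟩
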